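/- arXiv:1409.0726 — 5 statements merged into one kernel-verified Lean document; each statement's English description precedes it below -/
import Mathlib

section
/- Let G be a bounded simply connected domain in ℂ and let z₀ ∈ ∂G be an inward-corner (IC) point of G, i.e., there exist r > 0 and real numbers α < β with β − α > 1 such that the closure of the circular sector S := {z : 0 < |z−z₀| < r, απ < arg(z−z₀) < βπ} is contained in G ∪ {z₀}. Then z₀ is an NCS point of G: there is a closed disk D̄ with z₀ on its boundary circle and D̄∖{z₀} ⊂ G, and a line segment L from a point ζ₀ in the interior of D̄ to z₀ along which g_G(z,ζ₀)/|z−z₀| → +∞ as z → z₀. -/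
open MeasureTheory Filter Metric Set Polynomial Topology
open scoped ENNReal Classical

noncomputable section

/-- The normalized zero counting measure of a polynomial. -/
noncomputable def zeroMeasure (p : Polynomial ℂ) : Measure ℂ :=
  ((p.natDegree : ℝ≥0∞))⁻¹ • (p.roots.map (fun z => (Measure.dirac z : Measure ℂ))).sum

/-- Weak-star convergence of a sequence of measures along a filter: integrals of continuous
functions with compact support converge. -/
def WeakStarTo (μ : ℕ → Measure ℂ) (l : Filter ℕ) (ν : Measure ℂ) : Prop :=
  ∀ f : ℂ → ℝ, Continuous f → HasCompactSupport f →
    Tendsto (fun n => ∫ z, f z ∂(μ n)) l (𝓝 (∫ z, f z ∂ν))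

/-- The logarithmic potential of a measure. -/
noncomputable def logPotential (μ : Measure ℂ) (z : ℂ) : ℝ :=
  ∫ t, Real.log (1 / dist z t) ∂μ

/-- The logarithmic energy of a measure. -/
noncomputable def logEnergy (μ : Measure ℂ) : ℝ :=
  ∫ z, ∫ t, Real.log (1 / dist z t) ∂μ ∂μ

/-- The logarithmic kernel is integrable for the product measure. -/
def HasFiniteEnergy (μ : Measure ℂ) : Prop :=
  Integrable (fun p : ℂ × ℂ => Real.log (1 / dist p.1 p.2)) (μ.prod μ)

/-- The set of energies of probability measures of finite energy supported on `E`. -/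
def energies (E : Set ℂ) : Set ℝ :=
  {I | ∃ μ : Measure ℂ, IsProbabilityMeasure μ ∧ μ Eᶜ = 0 ∧ HasFiniteEnergy μ ∧ I = logEnergy μ}

/-- The logarithmic capacity of `E`: `exp(-V_E)` where `V_E` is the minimal energy, and `0`
if no probability measure on `E` has finite energy. -/
noncomputable def logCap (E : Set ℂ) : ℝ :=
  if (energies E).Nonempty then Real.exp (-sInf (energies E)) else 0

/-- `μ` is an equilibrium measure of `E`: an energy-minimizing probability measure on `E`. -/
def IsEquilibriumMeasure (E : Set ℂ) (μ : Measure ℂ) : Prop :=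
  IsProbabilityMeasure μ ∧ μ Eᶜ = 0 ∧ HasFiniteEnergy μ ∧ logEnergy μ = sInf (energies E)

/-- The sup norm of a polynomial on a set. -/
noncomputable def supNorm (E : Set ℂ) (p : Polynomial ℂ) : ℝ :=
  sSup ((fun z => ‖p.eval z‖) '' E)

/-- The unbounded connected component `Ω` of the complement of `E` (the points of the
complement whose connected component in the complement is unbounded). -/
def outerDomain (E : Set ℂ) : Set ℂ :=
  {z | z ∉ E ∧ ¬ Bornology.IsBounded (connectedComponentIn Eᶜ z)}

/-- A sequence of monic polynomials `P k` of respective degrees `N k`, indexed by an increasing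
sequence `N` of positive integers, is asymptotically extremal on `E` if
`limsup ‖P k‖_E^(1/N k) ≤ cap E`. -/
def AsymptoticallyExtremal (E : Set ℂ) (N : ℕ → ℕ) (P : ℕ → Polynomial ℂ) : Prop :=
  StrictMono N ∧ (∀ k, 0 < N k) ∧ (∀ k, (P k).Monic) ∧ (∀ k, (P k).natDegree = N k) ∧
    Filter.limsup (fun k => supNorm E (P k) ^ ((N k : ℝ)⁻¹)) atTop ≤ logCap E

/-- A function is harmonic on a planar set if it is locally the real part of an
analytic function. -/
def HarmonicOnPlane (u : ℂ → ℝ) (s : Set ℂ) : Prop :=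
  ∀ z ∈ s, ∃ ε > 0, Metric.ball z ε ⊆ s ∧ ∃ f : ℂ → ℂ,
    AnalyticOnNhd ℂ f (Metric.ball z ε) ∧ ∀ w ∈ Metric.ball z ε, u w = (f w).re

/-- `g` is the Green function of `G` with pole at `ζ`: harmonic and positive on `G ∖ {ζ}`,
`g(z) + log|z-ζ|` bounded near `ζ`, and `g → 0` at every boundary point of `G`. -/
structure IsGreenFunction (G : Set ℂ) (ζ : ℂ) (g : ℂ → ℝ) : Prop where
  harmonic : HarmonicOnPlane g (G \ {ζ})
  pos : ∀ z ∈ G \ {ζ}, 0 < g z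
  logBounded : ∃ C : ℝ, ∀ᶠ z in 𝓝[G \ {ζ}] ζ, |g z + Real.log (dist z ζ)| ≤ C
  boundaryLimit : ∀ t ∈ frontier G, Tendsto g (𝓝[G] t) (𝓝 0)

/-- `z₀` is a non-convex type singularity (NCS) point of `G`: a boundary point of `G`
carrying a closed disk `D̄ ⊆ G ∪ {z₀}` with `z₀` on its circumference, and a segment `L`
from a point `ζ₀` of the open disk to `z₀` along which `g_G(z,ζ₀)/|z-z₀| → +∞`. -/
def IsNCSPoint (G : Set ℂ) (z₀ : ℂ) : Prop :=
  z₀ ∈ frontier G ∧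
    ∃ c : ℂ, ∃ r : ℝ, 0 < r ∧ dist z₀ c = r ∧ Metric.closedBall c r \ {z₀} ⊆ G ∧
      ∃ ζ₀ ∈ Metric.ball c r, ∀ g : ℂ → ℝ, IsGreenFunction G ζ₀ g →
        Tendsto (fun z => g z / dist z z₀) (𝓝[segment ℝ ζ₀ z₀ \ {z₀}] z₀) atTop

end


lemma ncs_min_principle (K : Set ℂ) (hK : IsCompact K) (v : ℂ → ℝ) (hv : ContinuousOn v K)
    (hinterior : ∀ w ∈ K, v w < 0 → ∃ f : ℂ → ℂ, AnalyticAt ℂ f w ∧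
      ∀ᶠ x in 𝓝 w, x ∈ K ∧ v x = (f x).re) :
    ∀ w ∈ K, 0 ≤ v w := by
  intro w hw
  by_contra hneg
  push Not at hneg
  obtain ⟨x₁, hx₁, hmin⟩ := hK.exists_isMinOn ⟨w, hw⟩ hv
  have hm : v x₁ < 0 := lt_of_le_of_lt (hmin hw) hneg
  have hMc : IsCompact (K ∩ v ⁻¹' {v x₁}) :=
    hK.of_isClosed_subset (hv.preimage_isClosed_of_isClosed hK.isClosed isClosed_singleton)
      inter_subset_left
  obtain ⟨x, hx, hmax⟩ := hMc.exists_isMaxOn ⟨x₁, hx₁, rfl⟩ Complex.continuous_re.continuousOn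
  have hvx : v x = v x₁ := hx.2
  obtain ⟨f, hf, hfe⟩ := hinterior x hx.1 (hvx ▸ hm)
  have hfx : v x = (f x).re := hfe.self_of_nhds.2
  have hloc : IsLocalMax (norm ∘ fun z => Complex.exp (-f z)) x := by
    filter_upwards [hfe] with y hy
    simp only [Function.comp, Complex.norm_exp, Complex.neg_re]
    rw [← hy.2, ← hfx, hvx]
    exact Real.exp_le_exp.2 (neg_le_neg (hmin hy.1))
  have hd : ∀ᶠ z in 𝓝 x, DifferentiableAt ℂ (fun z => Complex.exp (-f z)) z := by
    filter_upwards [hf.eventually_analyticAt] with z hz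
    exact hz.differentiableAt.neg.cexp
  have hconst := Complex.eventually_eq_of_isLocalMax_norm hd hloc
  have hre : ∀ᶠ y in 𝓝 x, y.re ≤ x.re := by
    filter_upwards [hconst, hfe] with y hy hy'
    have h1 : ‖Complex.exp (-f y)‖ = ‖Complex.exp (-f x)‖ := by rw [hy]
    simp only [Complex.norm_exp, Complex.neg_re] at h1
    have h2 := Real.exp_injective h1
    have : v y = v x₁ := by rw [hy'.2, ← hvx, hfx]; linarith
    exact hmax (show y ∈ K ∩ v ⁻¹' {v x₁} from ⟨hy'.1, this⟩)
  obtain ⟨δ, hδ, hb⟩ := Metric.eventually_nhds_iff.1 hre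
  have := @hb (x + ((δ / 2 : ℝ) : ℂ)) (by
    rw [dist_eq_norm, add_sub_cancel_left, Complex.norm_real, Real.norm_eq_abs,
      abs_of_pos (by linarith)]; linarith)
  rw [Complex.add_re, Complex.ofReal_re] at this
  linarith

/-- closed sector in the right-hand direction -/
def ncsSector (a ρ : ℝ) : Set ℂ := {w | ‖w‖ ≤ ρ ∧ |w.arg| ≤ a}

lemma ncsSector_compact (a ρ : ℝ) (ha : 0 < a) (haπ : a < Real.pi) (hρ : 0 < ρ) :
    IsCompact (ncsSector a ρ) := by
  have : ncsSector a ρ = (fun p : ℝ × ℝ => (p.1 : ℂ) * Complex.exp (p.2 * Complex.I)) ''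
      (Set.Icc 0 ρ ×ˢ Set.Icc (-a) a) := by
    ext w
    constructor
    · rintro ⟨h1, h2⟩
      exact ⟨(‖w‖, w.arg), ⟨⟨norm_nonneg _, h1⟩, abs_le.1 h2⟩, Complex.norm_mul_exp_arg_mul_I w⟩
    · rintro ⟨⟨s, t⟩, ⟨⟨h1, h2⟩, h3, h4⟩, rfl⟩
      simp only at h1 h2 h3 h4 ⊢
      refine ⟨?_, ?_⟩
      · rw [norm_mul, Complex.norm_exp_ofReal_mul_I, Complex.norm_real, Real.norm_eq_abs,
          abs_of_nonneg h1]
        linarith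
      · rcases h1.eq_or_lt with h | h
        · rw [← h]; simp [ha.le]
        · rw [Complex.exp_mul_I, Complex.arg_mul_cos_add_sin_mul_I h ⟨by linarith, by linarith⟩]
          exact abs_le.2 ⟨h3, h4⟩
  rw [this]
  refine (isCompact_Icc.prod isCompact_Icc).image ?_
  fun_prop

lemma ncs_core (γ ρ : ℝ) (hγ : 1 < γ) (hγ2 : γ < 2) (hρ : 0 < ρ) (F : ℂ → ℝ)
    (hF : ContinuousOn F (ncsSector (γ * Real.pi / 2) ρ)) (hF0 : F 0 = 0)
    (hpos : ∀ w ∈ ncsSector (γ * Real.pi / 2) ρ, w ≠ 0 → 0 < F w)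
    (hharm : ∀ w ∈ ncsSector (γ * Real.pi / 2) ρ, w ≠ 0 → ∃ f : ℂ → ℂ, AnalyticAt ℂ f w ∧
      ∀ᶠ x in 𝓝 w, F x = (f x).re) :
    ∃ ε > 0, ∀ t : ℝ, 0 < t → t ≤ ρ → ε * t ^ γ⁻¹ ≤ F (t : ℂ) := by
  have hπ := Real.pi_pos
  set a := γ * Real.pi / 2 with ha
  have ha0 : 0 < a := by positivity
  have haπ : a < Real.pi := by rw [ha]; nlinarith
  have hγi : 0 < γ⁻¹ := by positivity
  have haγ : a * γ⁻¹ = Real.pi / 2 := by rw [ha]; field_simp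
  have hK := ncsSector_compact a ρ ha0 haπ hρ
  have hslit : ∀ w ∈ ncsSector a ρ, w ≠ 0 → w ∈ Complex.slitPlane := by
    intro w hw h0
    rw [Complex.mem_slitPlane_iff_arg]
    refine ⟨fun h => ?_, h0⟩
    have := hw.2
    rw [h, abs_of_pos hπ] at this
    linarith
  have hre : ∀ w : ℂ, (w ^ ((γ⁻¹ : ℝ) : ℂ)).re = ‖w‖ ^ γ⁻¹ * Real.cos (w.arg * γ⁻¹) :=
    fun w => Complex.cpow_ofReal_re w γ⁻¹
  -- minimum over the arc
  have hAc : IsCompact (ncsSector a ρ ∩ {w | ‖w‖ = ρ}) :=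
    hK.inter_right (isClosed_eq continuous_norm continuous_const)
  have hρmem : (ρ : ℂ) ∈ ncsSector a ρ ∩ {w | ‖w‖ = ρ} := by
    have : ‖(ρ : ℂ)‖ = ρ := by rw [Complex.norm_real, Real.norm_eq_abs, abs_of_pos hρ]
    refine ⟨⟨this.le, ?_⟩, this⟩
    rw [Complex.arg_ofReal_of_nonneg hρ.le]; simp [ha0.le]
  obtain ⟨p, hp, hpmin⟩ := hAc.exists_isMinOn ⟨_, hρmem⟩ (hF.mono inter_subset_left)
  have hp0 : p ≠ 0 := by
    intro h
    have := hp.2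
    rw [h] at this
    simp at this
    linarith
  have hFp := hpos p hp.1 hp0
  have hρp : 0 < ρ ^ γ⁻¹ := Real.rpow_pos_of_pos hρ _
  set ε := F p / ρ ^ γ⁻¹ with hε
  have hε0 : 0 < ε := by positivity
  refine ⟨ε, hε0, ?_⟩
  have main := ncs_min_principle (ncsSector a ρ) hK
    (fun w => F w - ε * (w ^ ((γ⁻¹ : ℝ) : ℂ)).re) ?_ ?_
  · intro t ht htρ
    have hn : ‖(t : ℂ)‖ = t := by rw [Complex.norm_real, Real.norm_eq_abs, abs_of_pos ht]
    have := main t ⟨hn.le.trans htρ, by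
      rw [Complex.arg_ofReal_of_nonneg ht.le]; simp [ha0.le]⟩
    simp only [hre, hn, Complex.arg_ofReal_of_nonneg ht.le] at this
    simp at this
    exact this
  · refine hF.sub (continuousOn_const.mul ?_)
    intro w hw
    refine (Complex.continuous_re.continuousAt.comp
      (Complex.continuousAt_cpow_const_of_re_pos ?_ (by simpa using hγi))).continuousWithinAt
    by_cases h0 : w = 0
    · left; simp [h0]
    · rcases hslit w hw h0 with h | h
      · left; exact h.le
      · right; exact h
  · intro w hw hneg
    have hw0 : w ≠ 0 := by
      rintro rfl
      rw [hF0, hre] at hneg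
      simp [Real.zero_rpow hγi.ne'] at hneg
    have hFw := hpos w hw hw0
    have hwn : 0 < ‖w‖ := norm_pos_iff.2 hw0
    have h1 : ‖w‖ < ρ := by
      refine lt_of_le_of_ne hw.1 fun h => ?_
      have h2 : F p ≤ F w := hpmin (show w ∈ ncsSector a ρ ∩ {w | ‖w‖ = ρ} from ⟨hw, h⟩)
      rw [hre, h] at hneg
      have h3 : ε * (ρ ^ γ⁻¹ * Real.cos (w.arg * γ⁻¹)) ≤ F p := by
        calc ε * (ρ ^ γ⁻¹ * Real.cos (w.arg * γ⁻¹)) ≤ ε * (ρ ^ γ⁻¹ * 1) := by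
              gcongr; exact Real.cos_le_one _
          _ = F p := by rw [hε]; field_simp
      linarith
    have h2 : |w.arg| < a := by
      refine lt_of_le_of_ne hw.2 fun h => ?_
      have : Real.cos (w.arg * γ⁻¹) = 0 := by
        rw [← Real.cos_abs, abs_mul, h, abs_of_pos hγi, haγ, Real.cos_pi_div_two]
      rw [hre, this] at hneg
      simp at hneg
      linarith
    have hsw := hslit w hw hw0
    obtain ⟨f, hf, hfe⟩ := hharm w hw hw0
    refine ⟨fun x => f x - ε * x ^ ((γ⁻¹ : ℝ) : ℂ),
      hf.sub (analyticAt_const.mul (analyticAt_id.cpow analyticAt_const hsw)), ?_⟩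
    have e1 : ∀ᶠ x in 𝓝 w, ‖x‖ < ρ := continuous_norm.continuousAt.eventually_lt_const h1
    have e2 : ∀ᶠ x in 𝓝 w, |x.arg| < a :=
      (Complex.continuousAt_arg hsw).abs.eventually_lt_const h2
    filter_upwards [hfe, e1, e2] with x hx hx1 hx2
    refine ⟨⟨hx1.le, hx2.le⟩, ?_⟩
    rw [Complex.sub_re, Complex.re_ofReal_mul, hx]

/-- **Inward corner points are NCS points.** If `G` is a bounded simply connected domain and
`z₀ ∈ ∂G` carries a circular sector `S = {z : 0 < |z-z₀| < r, απ < arg(z-z₀) < βπ}` with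
`β - α > 1` whose closure is contained in `G ∪ {z₀}`, then `z₀` is an NCS point of `G`. -/
theorem inward_corner_is_NCS
    (G : Set ℂ) (hGopen : IsOpen G) (hGconn : IsConnected G)
    (hGbdd : Bornology.IsBounded G) (hGsc : SimplyConnectedSpace G)
    (z₀ : ℂ) (hz₀ : z₀ ∈ frontier G)
    (r α β : ℝ) (hr : 0 < r) (hαβ : 1 < β - α)
    (S : Set ℂ)
    (hS : S = (fun p : ℝ × ℝ => z₀ + (p.1 : ℂ) * Complex.exp (Complex.I * (p.2 : ℂ))) ''
      (Set.Ioo 0 r ×ˢ Set.Ioo (α * Real.pi) (β * Real.pi)))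
    (hsub : closure S ⊆ G ∪ {z₀}) :
    IsNCSPoint G z₀ := by
  have hπ := Real.pi_pos
  obtain ⟨γ, hγ1, hγ2, hγ3⟩ : ∃ γ : ℝ, 1 < γ ∧ γ < 2 ∧ γ < β - α := by
    obtain ⟨γ, h1, h2⟩ := exists_between (lt_min one_lt_two hαβ)
    exact ⟨γ, h1, h2.trans_le (min_le_left _ _), h2.trans_le (min_le_right _ _)⟩
  set e : ℂ := Complex.exp (((α + β) * Real.pi / 2 : ℝ) * Complex.I) with he
  have hen : ‖e‖ = 1 := Complex.norm_exp_ofReal_mul_I _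
  have he0 : e ≠ 0 := by rw [← norm_pos_iff, hen]; norm_num
  -- points of the sector lie in `G`
  have hmem : ∀ w : ℂ, w ≠ 0 → ‖w‖ < r → |w.arg| ≤ γ * Real.pi / 2 → z₀ + e * w ∈ G := by
    intro w hw0 hwr hwa
    have hwn : 0 < ‖w‖ := norm_pos_iff.2 hw0
    have hwS : z₀ + e * w ∈ S := by
      rw [hS]
      rw [abs_le] at hwa
      refine ⟨(‖w‖, (α + β) * Real.pi / 2 + w.arg), ⟨⟨hwn, hwr⟩, ?_, ?_⟩, ?_⟩
      · simp only; nlinarith [hwa.1]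
      · simp only; nlinarith [hwa.2]
      · simp only
        rw [he]
        conv_rhs => rw [← Complex.norm_mul_exp_arg_mul_I w]
        rw [Complex.ofReal_add, mul_add, Complex.exp_add, mul_comm Complex.I, mul_comm Complex.I]
        ring
    rcases hsub (subset_closure hwS) with h | h
    · exact h
    · exfalso
      have h' : z₀ + e * w = z₀ := h
      have : e * w = 0 := by linear_combination h'
      exact (mul_ne_zero he0 hw0) this
  refine ⟨hz₀, z₀ + e * ((r / 4 : ℝ) : ℂ), r / 4, by positivity, ?_, ?_,
    z₀ + e * ((r / 4 : ℝ) : ℂ), Metric.mem_ball_self (by positivity), ?_⟩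
  · rw [dist_eq_norm, sub_add_cancel_left, norm_neg, norm_mul, hen, Complex.norm_real,
      Real.norm_eq_abs, abs_of_pos (by positivity), one_mul]
  · rintro z ⟨hz, hzz⟩
    have hzz : z ≠ z₀ := hzz
    obtain ⟨w, rfl⟩ : ∃ w, z = z₀ + e * w := ⟨(z - z₀) / e, by field_simp; ring⟩
    have hw0 : w ≠ 0 := by rintro rfl; simp at hzz
    have hd : ‖w - ((r / 4 : ℝ) : ℂ)‖ ≤ r / 4 := by
      rw [Metric.mem_closedBall, dist_eq_norm, add_sub_add_left_eq_sub, ← mul_sub, norm_mul, hen,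
        one_mul] at hz
      exact hz
    have hsq := Complex.sq_norm (w - ((r / 4 : ℝ) : ℂ))
    rw [Complex.normSq_apply, Complex.sub_re, Complex.sub_im, Complex.ofReal_re,
      Complex.ofReal_im] at hsq
    have hsqw := Complex.sq_norm w
    rw [Complex.normSq_apply] at hsqw
    have hwn : 0 < ‖w‖ := norm_pos_iff.2 hw0
    have hle : ‖w - ((r / 4 : ℝ) : ℂ)‖ ^ 2 ≤ (r / 4) ^ 2 := by gcongr
    have hrepos : 0 < w.re := by
      by_contra h
      push Not at h
      nlinarith [sq_pos_of_pos hwn]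
    refine hmem w hw0 ?_ ?_
    · have h1 : ‖w‖ ≤ ‖w - ((r / 4 : ℝ) : ℂ)‖ + ‖((r / 4 : ℝ) : ℂ)‖ := norm_le_norm_sub_add _ _
      rw [Complex.norm_real, Real.norm_eq_abs, abs_of_pos (by positivity)] at h1
      linarith
    · have := (Complex.abs_arg_lt_pi_div_two_iff (z := w)).2 (Or.inl hrepos)
      nlinarith
  intro g hg
  set ζ : ℂ := z₀ + e * ((r / 4 : ℝ) : ℂ) with hζ
  set K := ncsSector (γ * Real.pi / 2) (r / 8) with hKdef
  have hφ : Continuous fun w : ℂ => z₀ + e * w := by fun_prop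
  have hKG : ∀ w ∈ K, w ≠ 0 → z₀ + e * w ∈ G \ {ζ} := by
    intro w hw h0
    refine ⟨hmem w h0 (by have := hw.1; linarith) hw.2, fun h => ?_⟩
    have h' : z₀ + e * w = ζ := h
    rw [hζ] at h'
    have : w = ((r / 4 : ℝ) : ℂ) := mul_left_cancel₀ he0 (add_left_cancel h')
    have hw1 := hw.1
    rw [this, Complex.norm_real, Real.norm_eq_abs, abs_of_pos (by positivity)] at hw1
    linarith
  have hloc : ∀ w ∈ K, w ≠ 0 → ∃ f : ℂ → ℂ, AnalyticAt ℂ f w ∧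
      ∀ᶠ x in 𝓝 w, g (z₀ + e * x) = (f x).re := by
    intro w hw h0
    obtain ⟨δ, hδ, -, f, hf, hfe⟩ := hg.harmonic _ (hKG w hw h0)
    refine ⟨fun x => f (z₀ + e * x), ?_, ?_⟩
    · have h1 : AnalyticAt ℂ f (z₀ + e * w) := hf _ (Metric.mem_ball_self hδ)
      have h2 : AnalyticAt ℂ (fun x : ℂ => z₀ + e * x) w :=
        analyticAt_const.add (analyticAt_const.mul analyticAt_id)
      exact AnalyticAt.comp (g := f) (f := fun x : ℂ => z₀ + e * x) h1 h2
    · filter_upwards [hφ.continuousAt.eventually (Metric.ball_mem_nhds _ hδ)] with x hx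
      exact hfe _ hx
  obtain ⟨ε, hε, hcore⟩ := ncs_core γ (r / 8) hγ1 hγ2 (by positivity)
    (Function.update (fun w => g (z₀ + e * w)) 0 0)
    (by
      rw [continuousOn_update_iff]
      constructor
      · intro w hw
        obtain ⟨f, hf, hfe⟩ := hloc w hw.1 hw.2
        have : ContinuousAt (fun x => (f x).re) w :=
          Complex.continuous_re.continuousAt.comp hf.continuousAt
        exact (this.congr (hfe.mono fun x hx => hx.symm)).continuousWithinAt
      · intro _
        refine (hg.boundaryLimit z₀ hz₀).comp (tendsto_nhdsWithin_iff.2 ⟨?_, ?_⟩)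
        · have := hφ.tendsto 0
          simp only [mul_zero, add_zero] at this
          exact this.mono_left nhdsWithin_le_nhds
        · filter_upwards [self_mem_nhdsWithin] with w hw
          exact (hKG w hw.1 hw.2).1)
    (by simp)
    (by
      intro w hw h0
      rw [Function.update_of_ne h0]
      exact hg.pos _ (hKG w hw h0))
    (by
      intro w hw h0
      obtain ⟨f, hf, hfe⟩ := hloc w hw h0
      refine ⟨f, hf, ?_⟩
      filter_upwards [hfe, isOpen_ne.mem_nhds h0] with x hx hx0
      rw [Function.update_of_ne hx0]
      exact hx)
  have hd0 : Tendsto (fun z => dist z z₀) (𝓝[segment ℝ ζ z₀ \ {z₀}] z₀) (𝓝[>] 0) := by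
    refine tendsto_nhdsWithin_iff.2 ⟨?_, ?_⟩
    · have : Continuous fun z : ℂ => dist z z₀ := by fun_prop
      have h := this.tendsto z₀
      rw [dist_self] at h
      exact h.mono_left nhdsWithin_le_nhds
    · filter_upwards [self_mem_nhdsWithin] with z hz
      exact dist_pos.2 hz.2
  have hγneg : γ⁻¹ - 1 < 0 := by
    have := inv_lt_one_of_one_lt₀ hγ1
    linarith
  have hlim := ((tendsto_rpow_neg_nhdsGT_zero hγneg).comp hd0).const_mul_atTop hε
  refine tendsto_atTop_mono' _ ?_ hlim
  have hsmall : ∀ᶠ z in 𝓝[segment ℝ ζ z₀ \ {z₀}] z₀, dist z z₀ < r / 8 :=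
    nhdsWithin_le_nhds (Metric.ball_mem_nhds z₀ (by positivity))
  filter_upwards [hsmall, self_mem_nhdsWithin] with z hz hzs
  obtain ⟨⟨s, t, hs, ht, hst, rfl⟩, hne⟩ := hzs
  have hform : s • ζ + t • z₀ = z₀ + e * ((s * (r / 4) : ℝ) : ℂ) := by
    have hst' : (s : ℂ) + (t : ℂ) = 1 := by exact_mod_cast hst
    rw [hζ, Complex.real_smul, Complex.real_smul]
    push_cast
    linear_combination z₀ * hst'
  rw [hform] at hz hne ⊢
  have hτ0 : 0 ≤ s * (r / 4) := by positivity
  generalize s * (r / 4) = τ at hz hne hτ0 ⊢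
  have hdist : dist (z₀ + e * (τ : ℂ)) z₀ = τ := by
    rw [dist_eq_norm, add_sub_cancel_left, norm_mul, hen, Complex.norm_real, Real.norm_eq_abs,
      abs_of_nonneg hτ0, one_mul]
  have hτ : 0 < τ := by
    rw [← hdist]; exact dist_pos.2 hne
  rw [hdist] at hz
  have hc := hcore τ hτ hz.le
  rw [Function.update_of_ne (by exact_mod_cast hτ.ne')] at hc
  simp only [Function.comp, hdist]
  rw [le_div_iff₀ hτ, mul_assoc]
  have : τ ^ (γ⁻¹ - 1) * τ = τ ^ γ⁻¹ := by
    rw [Real.rpow_sub_one hτ.ne']; field_simp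
  rw [this]
  exact hc
end

section
/- Let G be a bounded simply connected domain, z₀ ∈ ∂G, and D̄ a closed disk with z₀ on its boundary circle and D̄∖{z₀} ⊂ G. If there exist a point ζ₀ in the interior of D̄ and a line segment L from ζ₀ to z₀ such that g_G(z,ζ₀)/|z−z₀| → +∞ as z → z₀ along L, then for every point ζ in the open disk D (the interior of D̄) the same limit holds along the line segment from ζ to z₀: g_G(z,ζ)/|z−z₀| → +∞ as z → z₀ along that segment. -/
open MeasureTheory Filter Metric Set Polynomial Topology
open scoped ENNReal Classical

open InnerProductSpace in
theorem harmAt_of_plane {u : ℂ → ℝ} {s : Set ℂ} (h : HarmonicOnPlane u s) {z : ℂ} (hz : z ∈ s) :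
    HarmonicAt u z := by
  obtain ⟨ε, hε, -, f, hf, hfe⟩ := h z hz
  have h1 : HarmonicAt (fun w => (f w).re) z := (hf z (mem_ball_self hε)).harmonicAt_re
  refine (harmonicAt_congr_nhds ?_).2 h1
  filter_upwards [ball_mem_nhds z hε] with w hw using hfe w hw

open InnerProductSpace in
theorem harmAt_localMin {u : ℂ → ℝ} {z : ℂ} (h : HarmonicAt u z) (hm : IsLocalMin u z) :
    ∀ᶠ y in 𝓝 z, u y = u z := by
  obtain ⟨ε, h₁ε, h₂ε⟩ := isOpen_iff.1 (isOpen_setOfPred_harmonicAt (f := u)) z h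
  obtain ⟨F, h₁F, h₂F⟩ := InnerProductSpace.HarmonicOnNhd.exists_analyticOnNhd_ball_re_eq
    (f := u) (fun _ hy ↦ h₂ε hy)
  have hb := ball_mem_nhds z h₁ε
  have hd : ∀ᶠ y in 𝓝 z, DifferentiableAt ℂ (fun w => Complex.exp (-F w)) y := by
    filter_upwards [hb] with y hy
    exact (h₁F y hy).differentiableAt.neg.cexp
  have key : ∀ y ∈ ball z ε, ‖Complex.exp (-F y)‖ = Real.exp (-u y) := by
    intro y hy
    rw [Complex.norm_exp, Complex.neg_re, ← h₂F hy]
  have hc : IsLocalMax (norm ∘ fun w => Complex.exp (-F w)) z := by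
    filter_upwards [hb, hm] with y hy hy2
    simp only [Function.comp]
    rw [key y hy, key z (mem_ball_self h₁ε)]
    exact Real.exp_le_exp.2 (neg_le_neg hy2)
  filter_upwards [hb, Complex.eventually_eq_of_isLocalMax_norm hd hc] with y hy hy2
  have := congrArg norm hy2
  rw [key y hy, key z (mem_ball_self h₁ε)] at this
  have := Real.exp_injective this
  linarith

open InnerProductSpace in
theorem harnack_disk {u : ℂ → ℝ} {c : ℂ} {R : ℝ} (h : ∀ z ∈ ball c R, HarmonicAt u z)
    (hpos : ∀ z ∈ ball c R, 0 < u z) {z : ℂ} (hz : z ∈ ball c R) :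
    |u z - u c| ≤ dist z c / R * (u z + u c) := by
  obtain ⟨F, h₁F, h₂F⟩ := InnerProductSpace.HarmonicOnNhd.exists_analyticOnNhd_ball_re_eq
    (f := u) h
  have hR : 0 < R := nonempty_ball.1 ⟨z, hz⟩
  have hcm : c ∈ ball c R := mem_ball_self hR
  have hre : ∀ y ∈ ball c R, (F y).re = u y := fun y hy => h₂F hy
  have hden : ∀ y ∈ ball c R, F y + (starRingEnd ℂ) (F c) ≠ 0 := by
    intro y hy h0
    have := congrArg Complex.re h0
    simp [hre y hy, hre c hcm] at this
    linarith [hpos y hy, hpos c hcm]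
  set φ : ℂ → ℂ := fun y => (F y - F c) / (F y + (starRingEnd ℂ) (F c)) with hφ
  have hφc : φ c = 0 := by simp [hφ]
  have hd : DifferentiableOn ℂ φ (ball c R) :=
    (h₁F.differentiableOn.sub_const _).div (h₁F.differentiableOn.add_const _) hden
  have hsq : ∀ y ∈ ball c R, ‖F y - F c‖ ^ 2 = (u y - u c) ^ 2 + ((F y).im - (F c).im) ^ 2 := by
    intro y hy
    rw [Complex.sq_norm, Complex.normSq_apply, Complex.sub_re, Complex.sub_im, hre y hy, hre c hcm]
    ring
  have hsq2 : ∀ y ∈ ball c R, ‖F y + (starRingEnd ℂ) (F c)‖ ^ 2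
      = (u y + u c) ^ 2 + ((F y).im - (F c).im) ^ 2 := by
    intro y hy
    rw [Complex.sq_norm, Complex.normSq_apply, Complex.add_re, Complex.add_im, Complex.conj_re,
      Complex.conj_im, hre y hy, hre c hcm]
    ring
  have hmaps : MapsTo φ (ball c R) (closedBall (φ c) 1) := by
    intro y hy
    rw [hφc, mem_closedBall_zero_iff, norm_div]
    apply div_le_one_of_le₀ _ (norm_nonneg _)
    rw [← sq_le_sq₀ (norm_nonneg _) (norm_nonneg _), hsq y hy, hsq2 y hy]
    nlinarith [mul_pos (hpos y hy) (hpos c hcm)]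
  have hS := Complex.dist_le_div_mul_dist_of_mapsTo_ball hd hmaps hz
  rw [hφc, dist_zero_right, norm_div, div_le_iff₀ (norm_pos_iff.2 (hden z hz))] at hS
  have hs0 : 0 ≤ dist z c / R := by positivity
  have hs1 : dist z c / R ≤ 1 := div_le_one_of_le₀ (le_of_lt hz) hR.le
  have e : 1 / R * dist z c = dist z c / R := by ring
  rw [e] at hS
  set s := dist z c / R
  have h2 : ‖F z - F c‖ ^ 2 ≤ (s * ‖F z + (starRingEnd ℂ) (F c)‖) ^ 2 :=
    pow_le_pow_left₀ (norm_nonneg _) hS 2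
  rw [mul_pow, hsq z hz, hsq2 z hz] at h2
  have hs2 : s ^ 2 ≤ 1 := pow_le_one₀ hs0 hs1
  apply abs_le_of_sq_le_sq
  · nlinarith [mul_nonneg (sub_nonneg.2 hs2) (sq_nonneg ((F z).im - (F c).im))]
  · exact mul_nonneg hs0 (by linarith [hpos z hz, hpos c hcm])

open InnerProductSpace in
theorem min_principle {G : Set ℂ} (hG : IsOpen G) (hGb : Bornology.IsBounded G) {c : ℂ} {ρ : ℝ}
    {h : ℂ → ℝ} (hh : ∀ z ∈ G \ ball c ρ, HarmonicAt h z) (hs : ∀ z ∈ sphere c ρ, 0 ≤ h z)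
    (hf : ∀ t ∈ frontier G, Tendsto h (𝓝[G] t) (𝓝 0)) :
    ∀ w ∈ G \ ball c ρ, 0 ≤ h w := by
  intro w hw
  by_contra hneg
  push Not at hneg
  have hcont : ∀ z ∈ G \ ball c ρ, ContinuousAt h z := fun z hz => (hh z hz).1.continuousAt
  set S : Set ℂ := {z | z ∈ G \ ball c ρ ∧ h z ≤ h w} with hS
  have hSG : S ⊆ G := fun z hz => hz.1.1
  have hSclosed : IsClosed S := by
    refine isClosed_of_closure_subset fun z hz => ?_
    have hfr : ∃ᶠ y in 𝓝 z, y ∈ S := mem_closure_iff_frequently.1 hz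
    have hnb : z ∉ ball c ρ := by
      intro hzb
      obtain ⟨y, hy, hyS⟩ := (hfr.and_eventually (isOpen_ball.mem_nhds hzb)).exists
      exact hy.1.2 hyS
    by_cases hzG : z ∈ G
    · refine ⟨⟨hzG, hnb⟩, ?_⟩
      by_contra hlt
      push Not at hlt
      obtain ⟨y, hy, hy2⟩ := (hfr.and_eventually
        ((hcont z ⟨hzG, hnb⟩).eventually (lt_mem_nhds hlt))).exists
      exact absurd hy.2 (not_le.2 hy2)
    · have hzf : z ∈ frontier G := by
        rw [hG.frontier_eq]; exact ⟨closure_mono hSG hz, hzG⟩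
      have hev := (hf z hzf).eventually (lt_mem_nhds hneg)
      rw [eventually_nhdsWithin_iff] at hev
      obtain ⟨y, hy, hy2⟩ := (hfr.and_eventually hev).exists
      exact absurd hy.2 (not_le.2 (hy2 hy.1.1))
  have hScomp : IsCompact S := Metric.isCompact_of_isClosed_isBounded hSclosed (hGb.subset hSG)
  obtain ⟨p, hpS, hp⟩ := hScomp.exists_isMinOn ⟨w, hw, le_rfl⟩
    (fun z hz => (hcont z hz.1).continuousWithinAt)
  have hpmin : ∀ y ∈ G \ ball c ρ, h p ≤ h y := by
    intro y hy
    by_cases hyw : h y ≤ h w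
    · exact hp (show y ∈ S from ⟨hy, hyw⟩)
    · exact hpS.2.trans (not_le.1 hyw).le
  set T : Set ℂ := {z | z ∈ S ∧ h z = h p} with hT
  have hTopen : IsOpen T := by
    rw [isOpen_iff_mem_nhds]
    rintro z ⟨hzS, hzp⟩
    have hzc : z ∉ closedBall c ρ := by
      intro hzc
      have : z ∈ sphere c ρ := le_antisymm hzc (not_lt.1 hzS.1.2)
      linarith [hs z this, hzS.2]
    have hU : ∀ᶠ y in 𝓝 z, y ∈ G \ ball c ρ := by
      filter_upwards [hG.mem_nhds hzS.1.1, isClosed_closedBall.isOpen_compl.mem_nhds hzc] with y h1 h2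
      exact ⟨h1, fun h3 => h2 (ball_subset_closedBall h3)⟩
    have hlm : IsLocalMin h z := by
      filter_upwards [hU] with y hy
      rw [hzp]; exact hpmin y hy
    filter_upwards [hU, harmAt_localMin (hh z hzS.1) hlm] with y hy hy2
    exact ⟨⟨hy, hy2.trans_le hzS.2⟩, hy2.trans hzp⟩
  have hTclosed : IsClosed T := by
    have : T = S ∩ h ⁻¹' {h p} := rfl
    rw [this]
    exact ContinuousOn.preimage_isClosed_of_isClosed
      (fun z hz => (hcont z hz.1).continuousWithinAt) hSclosed isClosed_singleton
  have huniv : T = univ := IsClopen.eq_univ ⟨hTclosed, hTopen⟩ ⟨p, hpS, rfl⟩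
  have : IsCompact (univ : Set ℂ) := huniv ▸ hScomp.of_isClosed_subset hTclosed (fun z hz => hz.1)
  exact noncompact_univ ℂ this

open InnerProductSpace in
theorem green_compare {G : Set ℂ} (hG : IsOpen G) (hGb : Bornology.IsBounded G) {c : ℂ} {ρ : ℝ}
    (hρ : 0 < ρ) (hcl : closedBall c ρ ⊆ G) {ζ ζ₀ : ℂ} (hζ : ζ ∈ ball c ρ) (hζ₀ : ζ₀ ∈ ball c ρ)
    {g g₀ : ℂ → ℝ} (hg : IsGreenFunction G ζ g) (hg₀ : IsGreenFunction G ζ₀ g₀) :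
    ∃ m > 0, ∀ w ∈ G \ ball c ρ, m * g₀ w ≤ g w := by
  have mem : ∀ {ζ : ℂ}, ζ ∈ ball c ρ → ∀ z ∈ G \ ball c ρ, z ∈ G \ {ζ} := by
    intro ζ hζ z hz
    exact ⟨hz.1, fun h => hz.2 (by rw [mem_singleton_iff.1 h]; exact hζ)⟩
  have hsp : ∀ z ∈ sphere c ρ, z ∈ G \ ball c ρ := fun z hz =>
    ⟨hcl (sphere_subset_closedBall hz), fun h => (ne_of_lt h) hz⟩
  have hne : (sphere c ρ).Nonempty := NormedSpace.sphere_nonempty.2 hρ.le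
  have hh : ∀ z ∈ G \ ball c ρ, HarmonicAt g z := fun z hz => harmAt_of_plane hg.harmonic (mem hζ z hz)
  have hh₀ : ∀ z ∈ G \ ball c ρ, HarmonicAt g₀ z :=
    fun z hz => harmAt_of_plane hg₀.harmonic (mem hζ₀ z hz)
  obtain ⟨a, ha, hamin⟩ := (isCompact_sphere c ρ).exists_isMinOn hne (f := g)
    (fun z hz => (hh z (hsp z hz)).1.continuousAt.continuousWithinAt)
  obtain ⟨b, hb, hbmax⟩ := (isCompact_sphere c ρ).exists_isMaxOn hne (f := g₀)
    (fun z hz => (hh₀ z (hsp z hz)).1.continuousAt.continuousWithinAt)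
  have hapos : 0 < g a := hg.pos a (mem hζ a (hsp a ha))
  have hbpos : 0 < g₀ b := hg₀.pos b (mem hζ₀ b (hsp b hb))
  have hm : 0 < g a / g₀ b := div_pos hapos hbpos
  refine ⟨g a / g₀ b, hm, fun w hw => ?_⟩
  set m := g a / g₀ b with hmd
  have := min_principle hG hGb (h := g - m • g₀) (c := c) (ρ := ρ) ?_ ?_ ?_ w hw
  · simpa using this
  · intro z hz
    have := (hh z hz).add ((hh₀ z hz).const_smul (c := -m))
    simpa [sub_eq_add_neg] using this
  · intro z hz
    have h1 : g a ≤ g z := hamin hz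
    have h2 : g₀ z ≤ g₀ b := hbmax hz
    have h3 : m * g₀ z ≤ m * g₀ b := by gcongr
    have h4 : m * g₀ b = g a := by rw [hmd]; field_simp
    simp only [Pi.sub_apply, Pi.smul_apply, smul_eq_mul]
    linarith
  · intro t ht
    have := (hg.boundaryLimit t ht).sub ((hg₀.boundaryLimit t ht).const_mul m)
    rw [mul_zero, sub_zero] at this
    exact this


/-- **Remark after Definition 2.1.** Let `G` be a bounded simply connected domain, `z₀ ∈ ∂G`,
and `D̄` a closed disk with `z₀` on its circumference and `D̄ ∖ {z₀} ⊆ G`. If for some point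
`ζ₀` of the open disk the Green function satisfies `g_G(z,ζ₀)/|z-z₀| → +∞` along the segment
from `ζ₀` to `z₀`, then the same holds for every point `ζ` of the open disk, along the segment
from `ζ` to `z₀`. -/
theorem NCS_limit_for_every_disk_point
    (G : Set ℂ) (hGopen : IsOpen G) (hGconn : IsConnected G)
    (hGbdd : Bornology.IsBounded G) (hGsc : SimplyConnectedSpace G)
    (z₀ : ℂ) (hz₀ : z₀ ∈ frontier G)
    (c : ℂ) (r : ℝ) (hr : 0 < r) (hcirc : dist z₀ c = r)
    (hdisk : Metric.closedBall c r \ {z₀} ⊆ G)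
    (ζ₀ : ℂ) (hζ₀ : ζ₀ ∈ Metric.ball c r)
    (g₀ : ℂ → ℝ) (hg₀ : IsGreenFunction G ζ₀ g₀)
    (hlim : Tendsto (fun z => g₀ z / dist z z₀) (𝓝[segment ℝ ζ₀ z₀ \ {z₀}] z₀) atTop) :
    ∀ ζ ∈ Metric.ball c r, ∀ g : ℂ → ℝ, IsGreenFunction G ζ g →
      Tendsto (fun z => g z / dist z z₀) (𝓝[segment ℝ ζ z₀ \ {z₀}] z₀) atTop := by

  intro ζ hζ g hg
  have hz₀G : z₀ ∉ G := by
    rw [hGopen.frontier_eq] at hz₀; exact hz₀.2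
  have hsub : ball c r ⊆ G := fun z hz =>
    hdisk ⟨ball_subset_closedBall hz, fun h => by
      rw [mem_singleton_iff] at h
      rw [h, mem_ball, hcirc] at hz
      exact lt_irrefl _ hz⟩
  obtain ⟨r', h1, h2⟩ := exists_between (max_lt hζ hζ₀ : max (dist ζ c) (dist ζ₀ c) < r)
  have hζ' : ζ ∈ ball c r' := (le_max_left _ _).trans_lt h1
  have hζ₀' : ζ₀ ∈ ball c r' := (le_max_right _ _).trans_lt h1
  have hr' : 0 < r' := dist_nonneg.trans_lt hζ'
  obtain ⟨m, hm, hcomp⟩ := green_compare hGopen hGbdd hr'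
    ((closedBall_subset_ball h2).trans hsub) hζ' hζ₀' hg hg₀
  have hd : 0 < dist ζ z₀ := dist_pos.2 fun h => hz₀G (h ▸ hsub hζ)
  have hd₀ : 0 < dist ζ₀ z₀ := dist_pos.2 fun h => hz₀G (h ▸ hsub hζ₀)
  set s := dist ζ c / r with hs
  set s₀ := dist ζ₀ c / r with hs₀
  have hs1 : s < 1 := (div_lt_one hr).2 hζ
  have hs₀1 : s₀ < 1 := (div_lt_one hr).2 hζ₀
  have hs0 : 0 ≤ s := by positivity
  have hs₀0 : 0 ≤ s₀ := by positivity
  set κ := (1 - s) / (1 + s) * ((1 - s₀) / (1 + s₀)) with hκ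
  have hκpos : 0 < κ := by
    have := sub_pos.2 hs1
    have := sub_pos.2 hs₀1
    positivity
  have key : ∀ t : ℝ, 0 < t → t ≤ 1 → 2 * r * t < dist ζ z₀ → 2 * r * t < r - r' →
      κ * m * g₀ (z₀ + t * (ζ₀ - z₀)) ≤ g (z₀ + t * (ζ - z₀)) := by
    intro t ht0 ht1 ht2 ht3
    have hscale : ∀ w : ℂ, dist (z₀ + t * (w - z₀)) (z₀ + t * (c - z₀)) = t * dist w c := by
      intro w
      rw [dist_eq_norm, dist_eq_norm,
        show z₀ + t * (w - z₀) - (z₀ + t * (c - z₀)) = (t : ℂ) * (w - c) by ring, norm_mul,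
        Complex.norm_real, Real.norm_eq_abs, abs_of_pos ht0]
    have hcz : dist (z₀ + t * (c - z₀)) z₀ = t * r := by
      rw [dist_eq_norm, add_sub_cancel_left, norm_mul, Complex.norm_real, Real.norm_eq_abs,
        abs_of_pos ht0, ← dist_eq_norm, dist_comm, hcirc]
    have hcc : dist (z₀ + t * (c - z₀)) c = (1 - t) * r := by
      rw [dist_eq_norm,
        show z₀ + t * (c - z₀) - c = ((1 - t : ℝ) : ℂ) * (z₀ - c) by push_cast; ring, norm_mul,
        Complex.norm_real, Real.norm_eq_abs, abs_of_nonneg (by linarith), ← dist_eq_norm, hcirc]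
    set C := z₀ + t * (c - z₀) with hC
    have hnear : ∀ w ∈ ball C (t * r), dist w z₀ < 2 * r * t := by
      intro w hw
      have := dist_triangle w C z₀
      have := mem_ball.1 hw
      linarith
    have hin : ∀ w ∈ ball C (t * r), w ∈ G \ {ζ} := by
      intro w hw
      refine ⟨hsub ?_, fun h => ?_⟩
      · have := dist_triangle w C c
        have := mem_ball.1 hw
        rw [mem_ball]
        linarith
      · have := hnear w hw
        rw [mem_singleton_iff.1 h] at this
        linarith
    have hball : ∀ w ∈ ball c r, z₀ + t * (w - z₀) ∈ ball C (t * r) := by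
      intro w hw
      rw [mem_ball, hscale w]
      exact mul_lt_mul_of_pos_left hw ht0
    have hH : ∀ w ∈ ball C (t * r), InnerProductSpace.HarmonicAt g w :=
      fun w hw => harmAt_of_plane hg.harmonic (hin w hw)
    have hP : ∀ w ∈ ball C (t * r), 0 < g w := fun w hw => hg.pos w (hin w hw)
    have e1 := harnack_disk hH hP (hball ζ hζ)
    have e2 := harnack_disk hH hP (hball ζ₀ hζ₀)
    rw [hscale, mul_div_mul_left _ _ ht0.ne'] at e1 e2
    have hp := hP _ (hball ζ₀ hζ₀)
    have hpin : z₀ + t * (ζ₀ - z₀) ∈ G \ ball c r' := by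
      refine ⟨(hin _ (hball ζ₀ hζ₀)).1, fun h => ?_⟩
      have a1 := hnear _ (hball ζ₀ hζ₀)
      have a2 := mem_ball.1 h
      have a3 := dist_triangle_left z₀ c (z₀ + t * (ζ₀ - z₀))
      rw [hcirc] at a3
      linarith
    have e3 := hcomp _ hpin
    rw [abs_le] at e1 e2
    have f1 : (1 - s) / (1 + s) * g C ≤ g (z₀ + t * (ζ - z₀)) := by
      rw [div_mul_eq_mul_div, div_le_iff₀ (by linarith)]
      linarith [e1.1]
    have f2 : (1 - s₀) / (1 + s₀) * g (z₀ + t * (ζ₀ - z₀)) ≤ g C := by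
      rw [div_mul_eq_mul_div, div_le_iff₀ (by linarith)]
      linarith [e2.2]
    calc κ * m * g₀ (z₀ + t * (ζ₀ - z₀)) = κ * (m * g₀ (z₀ + t * (ζ₀ - z₀))) := by ring
      _ ≤ κ * g (z₀ + t * (ζ₀ - z₀)) := by gcongr
      _ = (1 - s) / (1 + s) * ((1 - s₀) / (1 + s₀) * g (z₀ + t * (ζ₀ - z₀))) := by
        rw [hκ]; ring
      _ ≤ (1 - s) / (1 + s) * g C :=
        mul_le_mul_of_nonneg_left f2 (div_nonneg (by linarith) (by linarith))
      _ ≤ _ := f1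
  set τ : ℂ → ℝ := fun z => dist z z₀ / dist ζ z₀ with hτ
  set T : ℂ → ℂ := fun z => z₀ + (τ z : ℂ) * (ζ₀ - z₀) with hT
  have hτlim : Tendsto τ (𝓝 z₀) (𝓝 0) := by
    have : Continuous τ := by fun_prop
    simpa [hτ] using this.tendsto z₀
  have hTlim0 : Tendsto T (𝓝 z₀) (𝓝 z₀) := by
    have : Continuous T := by fun_prop
    simpa [hτ, hT] using this.tendsto z₀
  have hseg : ∀ z ∈ segment ℝ ζ z₀ \ {z₀}, 0 < τ z ∧ τ z ≤ 1 ∧ z = z₀ + (τ z : ℂ) * (ζ - z₀) := by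
    rintro z ⟨⟨a, b, ha, hb, hab, rfl⟩, hne⟩
    have hz : a • ζ + b • z₀ = z₀ + (a : ℂ) * (ζ - z₀) := by
      have : b = 1 - a := by linarith
      subst this
      simp only [Complex.real_smul]; push_cast; ring
    rw [hz] at hne ⊢
    have hτa : τ (z₀ + (a : ℂ) * (ζ - z₀)) = a := by
      simp only [hτ]
      rw [dist_eq_norm, add_sub_cancel_left, norm_mul, Complex.norm_real, Real.norm_eq_abs,
        abs_of_nonneg ha, ← dist_eq_norm, mul_div_cancel_right₀ _ hd.ne']
    rw [hτa]
    refine ⟨lt_of_le_of_ne ha fun h => hne (by simp [← h]), by linarith, rfl⟩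
  have hdT : ∀ z, dist (T z) z₀ = τ z * dist ζ₀ z₀ := by
    intro z
    have : 0 ≤ τ z := by positivity
    simp only [hT]
    rw [dist_eq_norm, add_sub_cancel_left, norm_mul, Complex.norm_real, Real.norm_eq_abs,
        abs_of_nonneg this, ← dist_eq_norm]
  have hTlim : Tendsto T (𝓝[segment ℝ ζ z₀ \ {z₀}] z₀) (𝓝[segment ℝ ζ₀ z₀ \ {z₀}] z₀) := by
    refine tendsto_nhdsWithin_iff.2 ⟨hTlim0.mono_left nhdsWithin_le_nhds, ?_⟩
    filter_upwards [self_mem_nhdsWithin] with z hz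
    obtain ⟨p1, p2, -⟩ := hseg z hz
    refine ⟨⟨τ z, 1 - τ z, p1.le, by linarith, by ring, ?_⟩, fun h => ?_⟩
    · simp only [hT, Complex.real_smul]; push_cast; ring
    · have := hdT z
      rw [mem_singleton_iff.1 h, dist_self] at this
      exact (mul_pos p1 hd₀).ne this
  have hK : 0 < κ * m * (dist ζ₀ z₀ / dist ζ z₀) := by positivity
  refine tendsto_atTop_mono' _ ?_ ((hlim.comp hTlim).const_mul_atTop hK)
  have hsm : Tendsto (fun z => 2 * r * τ z) (𝓝[segment ℝ ζ z₀ \ {z₀}] z₀) (𝓝 0) := by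
    simpa using (hτlim.const_mul (2 * r)).mono_left nhdsWithin_le_nhds
  filter_upwards [self_mem_nhdsWithin, hsm.eventually (gt_mem_nhds hd),
    hsm.eventually (gt_mem_nhds (sub_pos.2 h2))] with z hz q1 q2
  obtain ⟨p1, p2, p3⟩ := hseg z hz
  have hk := key (τ z) p1 p2 q1 q2
  rw [← p3] at hk
  have hdz : dist z z₀ = τ z * dist ζ z₀ := by simp only [hτ]; field_simp
  simp only [Function.comp]
  rw [hdT, hdz, le_div_iff₀ (mul_pos p1 hd)]
  refine le_trans (le_of_eq ?_) hk
  simp only [hT]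
  field_simp
end

section
/- Let G be a bounded simply connected domain, ζ₀ ∈ G, K ⊂ G a compact set containing ζ₀, and δ > 0. Then there exists a constant C = C(K,δ,ζ₀) > 0 such that g_G(z,ζ) ≥ C·g_G(z,ζ₀) for all ζ ∈ K and all z ∈ G with dist(z,K) > δ. -/
open MeasureTheory Filter Metric Set Polynomial Topology
open scoped ENNReal Classical

lemma hop_mono {u : ℂ → ℝ} {s t : Set ℂ} (h : HarmonicOnPlane u s) (ht : IsOpen t)
    (hts : t ⊆ s) : HarmonicOnPlane u t := by
  intro z hz
  obtain ⟨ε, hε, hb, f, hf, hu⟩ := h z (hts hz)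
  obtain ⟨η, hη, hb'⟩ := Metric.isOpen_iff.1 ht z hz
  refine ⟨min ε η, lt_min hε hη, (Metric.ball_subset_ball (min_le_right _ _)).trans hb', f,
    hf.mono (Metric.ball_subset_ball (min_le_left _ _)), fun w hw => hu w ?_⟩
  exact Metric.ball_subset_ball (min_le_left _ _) hw

lemma hop_comb {u v : ℂ → ℝ} {s : Set ℂ} (hu : HarmonicOnPlane u s) (hv : HarmonicOnPlane v s)
    (a b : ℝ) : HarmonicOnPlane (fun z => a * u z - b * v z) s := by
  intro z hz
  obtain ⟨ε, hε, hb, f, hf, hfu⟩ := hu z hz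
  obtain ⟨η, hη, hb', g, hg, hgv⟩ := hv z hz
  refine ⟨min ε η, lt_min hε hη, (Metric.ball_subset_ball (min_le_left _ _)).trans hb,
    fun w => (a : ℂ) * f w - (b : ℂ) * g w, ?_, ?_⟩
  · intro w hw
    exact (analyticAt_const.mul (hf w (Metric.ball_subset_ball (min_le_left _ _) hw))).sub
      (analyticAt_const.mul (hg w (Metric.ball_subset_ball (min_le_right _ _) hw)))
  · intro w hw
    simp [hfu w (Metric.ball_subset_ball (min_le_left _ _) hw),
      hgv w (Metric.ball_subset_ball (min_le_right _ _) hw)]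

lemma hop_cont {u : ℂ → ℝ} {s : Set ℂ} (hu : HarmonicOnPlane u s) {z : ℂ} (hz : z ∈ s) :
    ContinuousAt u z := by
  obtain ⟨ε, hε, hb, f, hf, hfu⟩ := hu z hz
  have h1 : ContinuousAt (fun w => (f w).re) z :=
    Complex.continuous_re.continuousAt.comp (hf z (Metric.mem_ball_self hε)).continuousAt
  refine h1.congr ?_
  filter_upwards [Metric.ball_mem_nhds z hε] with w hw
  exact (hfu w hw).symm

lemma hop_log (a : ℂ) (R : ℝ) (hR : 0 < R) :
    HarmonicOnPlane (fun z => Real.log (R / dist z a)) {a}ᶜ := by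
  intro z hz
  have hza : z ≠ a := hz
  have hd : 0 < dist z a := dist_pos.2 hza
  refine ⟨dist z a, hd, ?_, fun w => (Real.log R : ℂ) -
    (Complex.log ((w - a) / (z - a)) + (Real.log (dist z a) : ℂ)), ?_, ?_⟩
  · intro w hw hwa
    rw [Set.mem_singleton_iff] at hwa
    rw [hwa, Metric.mem_ball, dist_comm] at hw
    exact lt_irrefl _ hw
  · intro w hw
    have hza' : z - a ≠ 0 := sub_ne_zero.2 hza
    have hsl : (w - a) / (z - a) ∈ Complex.slitPlane := by
      apply Complex.ball_one_subset_slitPlane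
      rw [Metric.mem_ball, dist_eq_norm]
      have : (w - a) / (z - a) - 1 = (w - z) / (z - a) := by field_simp; ring
      rw [this, norm_div, div_lt_one (by simpa using hza'), ← dist_eq_norm, ← dist_eq_norm]
      exact hw
    have h1 : AnalyticAt ℂ (fun w => (w - a) / (z - a)) w :=
      (analyticAt_id.sub analyticAt_const).div analyticAt_const hza'
    exact analyticAt_const.sub ((h1.clog hsl).add analyticAt_const)
  · intro w hw
    have hwa : w ≠ a := by
      rintro rfl
      rw [Metric.mem_ball, dist_comm] at hw
      exact lt_irrefl _ hw
    have hw0 : 0 < dist w a := dist_pos.2 hwa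
    simp only [Complex.sub_re, Complex.add_re, Complex.ofReal_re, Complex.log_re, norm_div,
      ← dist_eq_norm]
    rw [Real.log_div hR.ne' hw0.ne', Real.log_div hw0.ne' hd.ne']
    ring

/-- Minimum principle. -/
lemma min_principle_s8 {U : Set ℂ} (hU : IsOpen U) (hb : Bornology.IsBounded U) {u : ℂ → ℝ}
    (hu : HarmonicOnPlane u U)
    (hbd : ∀ t ∈ closure U, t ∉ U → ∀ ε > 0, ∀ᶠ z in 𝓝[U] t, -ε < u z) :
    ∀ z ∈ U, 0 ≤ u z := by
  intro z₀ hz₀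
  by_contra! hneg
  have hcl : ∀ m < 0, IsClosed {z | z ∈ U ∧ u z ≤ m} := by
    intro m hm
    rw [← isOpen_compl_iff, isOpen_iff_mem_nhds]
    intro t ht
    by_cases htU : t ∈ U
    · have h1 : m < u t := by
        by_contra! h
        exact ht ⟨htU, h⟩
      filter_upwards [(hop_cont hu htU).eventually (lt_mem_nhds h1)] with w hw hw'
      exact absurd hw'.2 (not_le.2 hw)
    · by_cases htc : t ∈ closure U
      · have h2 := hbd t htc htU (-m) (by linarith)
        rw [eventually_nhdsWithin_iff] at h2
        filter_upwards [h2] with w hw hw'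
        have := hw hw'.1
        have := hw'.2
        linarith
      · filter_upwards [isClosed_closure.isOpen_compl.mem_nhds htc] with w hw hw'
        exact hw (subset_closure hw'.1)
  have hcomp : IsCompact {z | z ∈ U ∧ u z ≤ u z₀} :=
    Metric.isCompact_of_isClosed_isBounded (hcl _ hneg) (hb.subset fun z hz => hz.1)
  obtain ⟨a, ha, hamin⟩ := hcomp.exists_isMinOn ⟨z₀, hz₀, le_rfl⟩
    (f := u) (fun z hz => (hop_cont hu hz.1).continuousWithinAt)
  have hmin : ∀ z ∈ U, u a ≤ u z := by
    intro z hz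
    by_cases h : u z ≤ u z₀
    · exact hamin ⟨hz, h⟩
    · linarith [ha.2]
  set A : Set ℂ := {z | z ∈ U ∧ u z ≤ u a} with hA
  have hAc : IsClosed A := hcl _ (by linarith [ha.2])
  have hAo : IsOpen A := by
    rw [isOpen_iff_mem_nhds]
    intro t ht
    obtain ⟨ε, hε, hbl, f, hf, hfu⟩ := hu t ht.1
    have hloc : IsLocalMax (norm ∘ fun w => Complex.exp (-f w)) t := by
      filter_upwards [Metric.ball_mem_nhds t hε] with w hw
      simp only [Function.comp, Complex.norm_exp, Complex.neg_re]
      rw [← hfu w hw, ← hfu t (Metric.mem_ball_self hε)]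
      have := hmin w (hbl hw)
      have := ht.2
      exact Real.exp_le_exp.2 (by linarith)
    have hd : ∀ᶠ w in 𝓝 t, DifferentiableAt ℂ (fun w => Complex.exp (-f w)) w := by
      filter_upwards [Metric.ball_mem_nhds t hε] with w hw
      exact (hf w hw).differentiableAt.neg.cexp
    have hev := Complex.norm_eventually_eq_of_isLocalMax hd hloc
    filter_upwards [hev, Metric.ball_mem_nhds t hε] with w hw hwb
    simp only [Complex.norm_exp, Complex.neg_re] at hw
    rw [← hfu w hwb, ← hfu t (Metric.mem_ball_self hε)] at hw
    have := Real.exp_injective hw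
    refine ⟨hbl hwb, ?_⟩
    have := ht.2
    linarith
  have huniv : A = Set.univ := IsClopen.eq_univ ⟨hAc, hAo⟩ ⟨a, ha.1, le_rfl⟩
  have : Bornology.IsBounded (Set.univ : Set ℂ) := huniv ▸ hb.subset fun z hz => hz.1
  exact NormedSpace.unbounded_univ ℝ ℂ this

lemma log_dist_atBot (ζ : ℂ) (s : Set ℂ) :
    Tendsto (fun z => Real.log (dist z ζ)) (𝓝[s \ {ζ}] ζ) atBot := by
  refine Real.tendsto_log_nhdsGT_zero.comp (tendsto_nhdsWithin_iff.2 ⟨?_, ?_⟩)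
  · have : Tendsto (fun z => dist z ζ) (𝓝 ζ) (𝓝 (dist ζ ζ)) :=
      (continuous_id.dist continuous_const).tendsto ζ
    rw [dist_self] at this
    exact this.mono_left nhdsWithin_le_nhds
  · filter_upwards [self_mem_nhdsWithin] with z hz
    exact dist_pos.2 hz.2

/-- Near the pole, `p * g + q * log` tends to infinity when `q < p`. -/
lemma green_pole {G : Set ℂ} {ζ : ℂ} {g : ℂ → ℝ} (hg : IsGreenFunction G ζ g) (M : ℝ) :
    (∀ᶠ z in 𝓝[G \ {ζ}] ζ, M ≤ 2 * g z + Real.log (dist z ζ)) ∧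
    (∀ᶠ z in 𝓝[G \ {ζ}] ζ, M ≤ g z) ∧
    (∀ᶠ z in 𝓝[G \ {ζ}] ζ, M ≤ -2 * Real.log (dist z ζ) - g z) := by
  obtain ⟨C, hC⟩ := hg.logBounded
  have hl := (log_dist_atBot ζ G).eventually (eventually_le_atBot (-(|M| + 2 * |C|)))
  refine ⟨?_, ?_, ?_⟩ <;>
  · filter_upwards [hC, hl] with z h1 h2
    have := abs_le.1 h1
    have := le_abs_self M
    have := le_abs_self C
    have := abs_nonneg C
    linarith [this]

lemma green_upper {G : Set ℂ} (hGopen : IsOpen G) (hGbdd : Bornology.IsBounded G) {ζ : ℂ}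
    (hζ : ζ ∈ G) {R : ℝ} (hR : 0 < R) (hGR : G ⊆ ball ζ R) {g : ℂ → ℝ}
    (hg : IsGreenFunction G ζ g) : ∀ z ∈ G \ {ζ}, g z ≤ 2 * Real.log (R / dist z ζ) := by
  have hUo : IsOpen (G \ {ζ}) := hGopen.sdiff isClosed_singleton
  have key := min_principle_s8 hUo (hGbdd.subset sdiff_subset)
    (hop_comb (hop_mono (hop_log ζ R hR) hUo (fun z hz => hz.2)) hg.harmonic 2 1) ?_
  · intro z hz
    have := key z hz
    linarith
  intro t htc htU ε hε
  by_cases htζ : t = ζ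
  · subst htζ
    filter_upwards [(green_pole hg (-2 * Real.log R)).2.2, self_mem_nhdsWithin] with z h1 h2
    have : 0 < dist z t := dist_pos.2 h2.2
    rw [Real.log_div hR.ne' this.ne']
    linarith
  · have htf : t ∈ frontier G := by
      rw [frontier, hGopen.interior_eq]
      exact ⟨closure_mono sdiff_subset htc, fun h => htU ⟨h, htζ⟩⟩
    have h1 := (hg.boundaryLimit t htf).mono_left (nhdsWithin_mono t (sdiff_subset (t := {ζ})))
    filter_upwards [h1.eventually (gt_mem_nhds hε), self_mem_nhdsWithin] with z h2 h3
    have hd : 0 < dist z ζ := dist_pos.2 h3.2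
    have : 0 ≤ Real.log (R / dist z ζ) :=
      Real.log_nonneg ((one_le_div hd).2 (le_of_lt (hGR h3.1)))
    linarith

lemma green_lower {G : Set ℂ} {ζ : ℂ} {r : ℝ} (hr : 0 < r) (hGr : closedBall ζ r ⊆ G)
    {g : ℂ → ℝ} (hg : IsGreenFunction G ζ g) :
    ∀ z ∈ ball ζ r \ {ζ}, Real.log (r / dist z ζ) ≤ 2 * g z := by
  have hUo : IsOpen (ball ζ r \ {ζ}) := isOpen_ball.sdiff isClosed_singleton
  have hsub : ball ζ r \ {ζ} ⊆ G \ {ζ} := sdiff_subset_sdiff_left (ball_subset_closedBall.trans hGr)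
  have key := min_principle_s8 hUo (isBounded_ball.subset sdiff_subset)
    (hop_comb (hop_mono hg.harmonic hUo hsub)
      (hop_mono (hop_log ζ r hr) hUo (fun z hz => hz.2)) 2 1) ?_
  · intro z hz
    have := key z hz
    linarith
  intro t htc htU ε hε
  by_cases htζ : t = ζ
  · subst htζ
    filter_upwards [(green_pole hg (Real.log r)).1.filter_mono (nhdsWithin_mono t hsub),
      self_mem_nhdsWithin] with z h1 h2
    have : 0 < dist z t := dist_pos.2 h2.2
    rw [Real.log_div hr.ne' this.ne']
    linarith
  · have h0 : r ≤ dist t ζ := by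
      by_contra! h
      exact htU ⟨h, htζ⟩
    have h1 := hop_cont (hop_log ζ r hr) (z := t) htζ
    have h2 : Real.log (r / dist t ζ) ≤ 0 :=
      Real.log_nonpos (by positivity) ((div_le_one (hr.trans_le h0)).2 h0)
    filter_upwards [(h1.eventually (gt_mem_nhds (h2.trans_lt hε))).filter_mono nhdsWithin_le_nhds,
      self_mem_nhdsWithin] with z h3 h4
    have := hg.pos z (hsub h4)
    linarith

lemma green_prop {G : Set ℂ} {ζ a : ℂ} {r s c : ℝ} (hs : 0 < s) (hsr : s < r) (hc : 0 < c)
    (hGr : closedBall a r ⊆ G)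
    {g : ℂ → ℝ} (hg : IsGreenFunction G ζ g) (hgc : ∀ z ∈ ball a s \ {ζ}, c ≤ g z) :
    ∀ z ∈ ball a r \ {ζ}, s / 2 < dist z a →
      c * Real.log (r / dist z a) ≤ Real.log (r / (s / 2)) * g z := by
  have hr : 0 < r := hs.trans hsr
  set U : Set ℂ := (ball a r \ closedBall a (s / 2)) \ {ζ} with hUdef
  have hUo : IsOpen U := (isOpen_ball.sdiff isClosed_closedBall).sdiff isClosed_singleton
  have hsub : U ⊆ G \ {ζ} :=
    sdiff_subset_sdiff_left (sdiff_subset.trans (ball_subset_closedBall.trans hGr))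
  have hUa : U ⊆ {a}ᶜ := by
    rintro z hz rfl
    exact hz.1.2 (mem_closedBall_self (by positivity))
  set L := Real.log (r / (s / 2)) with hL
  have hLpos : 0 < L := Real.log_pos ((one_lt_div (by positivity)).2 (by linarith))
  have hlogle : ∀ z ∈ U, Real.log (r / dist z a) ≤ L := by
    intro z hz
    have h1 : s / 2 < dist z a := not_le.1 hz.1.2
    have : 0 < dist z a := by linarith
    apply Real.log_le_log (by positivity)
    gcongr
  have key := min_principle_s8 hUo (isBounded_ball.subset (sdiff_subset.trans sdiff_subset))
    (hop_comb (hop_mono hg.harmonic hUo hsub)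
      (hop_mono (hop_log a r hr) hUo hUa) L c) ?_
  · intro z hz hz2
    have := key z ⟨⟨hz.1, fun h => absurd h (not_le.2 hz2)⟩, hz.2⟩
    linarith
  intro t htc htU ε hε
  by_cases htζ : t = ζ
  · subst htζ
    filter_upwards [(green_pole hg c).2.1.filter_mono (nhdsWithin_mono t hsub),
      self_mem_nhdsWithin] with z h1 h2
    have := hlogle z h2
    nlinarith
  · by_cases hts : dist t a < s
    · have hnb : ball a s ∈ 𝓝 t := isOpen_ball.mem_nhds hts
      filter_upwards [mem_nhdsWithin_of_mem_nhds hnb, self_mem_nhdsWithin] with z h1 h2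
      have h3 := hgc z ⟨h1, h2.2⟩
      have := hlogle z h2
      nlinarith
    · have h0 : r ≤ dist t a := by
        by_contra! h
        refine htU ⟨⟨h, fun h' => ?_⟩, htζ⟩
        have : dist t a ≤ s / 2 := h'
        linarith
      have hta : t ≠ a := dist_pos.1 (hr.trans_le h0)
      have h1 := hop_cont (hop_log a r hr) (z := t) hta
      have h2 : Real.log (r / dist t a) ≤ 0 :=
        Real.log_nonpos (by positivity) ((div_le_one (hr.trans_le h0)).2 h0)
      filter_upwards [(h1.eventually (gt_mem_nhds (h2.trans_lt (div_pos hε hc)))).filter_mono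
        nhdsWithin_le_nhds, self_mem_nhdsWithin] with z h3 h4
      have h5 := hg.pos z (hsub h4)
      have h6 := mul_pos hLpos h5
      rw [lt_div_iff₀ hc] at h3
      linarith

/-- Uniform local lower bound. -/
def GreenLB (G : Set ℂ) (ζ a : ℂ) : Prop :=
  ∃ s > 0, ∃ c > 0, ∀ ξ ∈ ball ζ s, ∀ g : ℂ → ℝ, IsGreenFunction G ξ g →
    ∀ z ∈ ball a s \ {ξ}, c ≤ g z

lemma greenLB_self {G : Set ℂ} (hG : IsOpen G) {ζ : ℂ} (hζ : ζ ∈ G) : GreenLB G ζ ζ := by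
  obtain ⟨r, hr, hb⟩ := Metric.isOpen_iff.1 hG ζ hζ
  refine ⟨r / 8, by positivity, Real.log 2 / 2, by positivity, ?_⟩
  intro ξ hξ g hg z hz
  have hξ' : dist ξ ζ < r / 8 := hξ
  have hz' : dist z ζ < r / 8 := hz.1
  have hzξ : dist z ξ < r / 4 := by
    have := dist_triangle_right z ξ ζ
    linarith
  have hpos : 0 < dist z ξ := dist_pos.2 hz.2
  have h1 := green_lower (r := r / 2) (by positivity) (fun w hw => hb (by
    have hw' : dist w ξ ≤ r / 2 := hw
    have := dist_triangle w ξ ζ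
    rw [Metric.mem_ball]
    linarith)) hg z ⟨by rw [Metric.mem_ball]; linarith, hz.2⟩
  have h2 : Real.log 2 ≤ Real.log (r / 2 / dist z ξ) := by
    apply Real.log_le_log (by norm_num)
    rw [le_div_iff₀ hpos]
    linarith
  linarith

lemma greenLB_step {G : Set ℂ} {ζ a b : ℂ} {R : ℝ} (hR : 0 < R) (hb : ball b R ⊆ G)
    (hab : dist a b < R / 4) (h : GreenLB G ζ a) : GreenLB G ζ b := by
  obtain ⟨s, hs, c, hc, H⟩ := h
  set s' := min s (R / 4) with hs'
  have hs'0 : 0 < s' := lt_min hs (by positivity)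
  have hs's : s' ≤ s := min_le_left _ _
  have hs'R : s' ≤ R / 4 := min_le_right _ _
  set r := 5 * R / 8 with hr
  set L := Real.log (r / (s' / 2)) with hL
  have hLpos : 0 < L := Real.log_pos ((one_lt_div (by positivity)).2 (by linarith))
  have hl : 0 < Real.log (5 / 4) := Real.log_pos (by norm_num)
  refine ⟨s', hs'0, min c (c * Real.log (5 / 4) / L), lt_min hc (by positivity), ?_⟩
  intro ξ hξ g hg z hz
  have hξs : ξ ∈ ball ζ s := ball_subset_ball hs's hξ
  by_cases hza : dist z a < s
  · exact (min_le_left _ _).trans (H ξ hξs g hg z ⟨hza, hz.2⟩)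
  · push Not at hza
    refine (min_le_right _ _).trans ?_
    rw [div_le_iff₀ hLpos]
    have hzb : dist z b < s' := hz.1
    have hd : dist z a < R / 2 := by
      have := dist_triangle_right z a b
      linarith
    have hpos : 0 < dist z a := by linarith
    have h1 := green_prop (a := a) (r := r) (s := s') hs'0 (by linarith) hc (fun w hw => hb (by
      have hw' : dist w a ≤ r := hw
      have := dist_triangle w a b
      rw [Metric.mem_ball]
      linarith)) hg (fun w hw => H ξ hξs g hg w ⟨ball_subset_ball hs's hw.1, hw.2⟩) z
      ⟨by rw [Metric.mem_ball]; linarith, hz.2⟩ (by linarith)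
    have h2 : Real.log (5 / 4) ≤ Real.log (r / dist z a) := by
      apply Real.log_le_log (by norm_num)
      rw [le_div_iff₀ hpos]
      linarith
    have h3 := mul_le_mul_of_nonneg_left h2 hc.le
    rw [← hL] at h1
    linarith [mul_comm L (g z)]

lemma greenLB_all {G : Set ℂ} (hG : IsOpen G) (hGc : IsConnected G) {ζ a : ℂ} (hζ : ζ ∈ G)
    (ha : a ∈ G) : GreenLB G ζ a := by
  have hsub : G ⊆ {a | GreenLB G ζ a} := by
    refine hGc.isPreconnected.subset_of_closure_inter_subset ?_
      ⟨ζ, hζ, greenLB_self hG hζ⟩ ?_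
    · rw [isOpen_iff_mem_nhds]
      rintro x ⟨s, hs, c, hc, H⟩
      filter_upwards [Metric.ball_mem_nhds x (half_pos hs)] with y hy
      refine ⟨s / 2, by positivity, c, hc, fun ξ hξ g hg z hz => H ξ ?_ g hg z ⟨?_, hz.2⟩⟩
      · exact ball_subset_ball (by linarith) hξ
      · have h1 : dist z y < s / 2 := hz.1
        have h2 : dist y x < s / 2 := hy
        have := dist_triangle z y x
        rw [Metric.mem_ball]
        linarith
    · rintro b ⟨hbc, hbG⟩
      obtain ⟨R, hR, hb⟩ := Metric.isOpen_iff.1 hG b hbG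
      obtain ⟨y, hy, hyd⟩ := Metric.mem_closure_iff.1 hbc (R / 4) (by positivity)
      exact greenLB_step hR hb (by rwa [dist_comm]) hy
  exact hsub ha

lemma green_uniform {G : Set ℂ} (hG : IsOpen G) (hGc : IsConnected G) {K S : Set ℂ}
    (hK : IsCompact K) (hKG : K ⊆ G) (hS : IsCompact S) (hSG : S ⊆ G) :
    ∃ c > 0, ∀ ζ ∈ K, ∀ g : ℂ → ℝ, IsGreenFunction G ζ g → ∀ z ∈ S, z ≠ ζ → c ≤ g z := by
  have := (hK.prod hS).induction_on
    (p := fun T => ∃ c > 0, ∀ x ∈ T, ∀ g : ℂ → ℝ, IsGreenFunction G x.1 g → x.2 ≠ x.1 → c ≤ g x.2)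
    ⟨1, one_pos, by simp⟩ ?_ ?_ ?_
  · obtain ⟨c, hc, H⟩ := this
    exact ⟨c, hc, fun ζ hζ g hg z hz hne => H (ζ, z) ⟨hζ, hz⟩ g hg hne⟩
  · rintro s t hst ⟨c, hc, H⟩
    exact ⟨c, hc, fun x hx => H x (hst hx)⟩
  · rintro s t ⟨c, hc, H⟩ ⟨c', hc', H'⟩
    refine ⟨min c c', lt_min hc hc', ?_⟩
    rintro x (hx | hx) g hg hne
    · exact (min_le_left _ _).trans (H x hx g hg hne)
    · exact (min_le_right _ _).trans (H' x hx g hg hne)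
  · rintro ⟨ζ, a⟩ ⟨h1, h2⟩
    obtain ⟨s, hs, c, hc, H⟩ := greenLB_all hG hGc (hKG h1) (hSG h2)
    refine ⟨ball ζ s ×ˢ ball a s, mem_nhdsWithin_of_mem_nhds
      (prod_mem_nhds (ball_mem_nhds _ hs) (ball_mem_nhds _ hs)), c, hc, ?_⟩
    intro x hx g hg hne
    exact H x.1 hx.1 g hg x.2 ⟨hx.2, hne⟩

/-- **Harnack-type inequality (2.2).** Let `G` be a bounded simply connected domain,
`ζ₀ ∈ G`, `K ⊆ G` compact with `ζ₀ ∈ K`, and `δ > 0`. Then there is a constant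
`C = C(K,δ,ζ₀) > 0` such that `g_G(z,ζ) ≥ C g_G(z,ζ₀)` for all `ζ ∈ K` and all `z ∈ G`
with `dist(z,K) > δ`. -/
theorem harnack_green_lower_bound
    (G : Set ℂ) (hGopen : IsOpen G) (hGconn : IsConnected G)
    (hGbdd : Bornology.IsBounded G) (hGsc : SimplyConnectedSpace G)
    (ζ₀ : ℂ) (hζ₀ : ζ₀ ∈ G)
    (K : Set ℂ) (hK : IsCompact K) (hKG : K ⊆ G) (hζ₀K : ζ₀ ∈ K)
    (δ : ℝ) (hδ : 0 < δ) :
    ∃ C > 0, ∀ ζ ∈ K, ∀ g g₀ : ℂ → ℝ,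
      IsGreenFunction G ζ g → IsGreenFunction G ζ₀ g₀ →
        ∀ z ∈ G, δ < Metric.infDist z K → C * g₀ z ≤ g z := by
  obtain ⟨δ₁, hδ₁, hthick⟩ := hK.exists_cthickening_subset_open hGopen hKG
  have hKne : K.Nonempty := ⟨ζ₀, hζ₀K⟩
  set d := min δ δ₁ with hd
  have hd0 : 0 < d := lt_min hδ hδ₁
  have hdδ : d ≤ δ := min_le_left _ _
  have hcont : Continuous (fun z => Metric.infDist z K) := Metric.continuous_infDist_pt K
  set S : Set ℂ := Metric.cthickening d K with hSdef
  have hSG : S ⊆ G := (Metric.cthickening_mono (min_le_right _ _) K).trans hthick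
  have hS : IsCompact S := hK.cthickening
  have hmemS : ∀ z, Metric.infDist z K ≤ d → z ∈ S := by
    intro z hz
    rw [hSdef, hK.cthickening_eq_biUnion_closedBall hd0.le]
    obtain ⟨y, hy, hyd⟩ := hK.exists_infDist_eq_dist hKne z
    exact mem_biUnion hy (by rw [Metric.mem_closedBall, ← hyd]; exact hz)
  obtain ⟨c, hc, Hc⟩ := green_uniform hGopen hGconn hK hKG hS hSG
  obtain ⟨R₀, hR₀⟩ := hGbdd.subset_ball ζ₀
  set R := max R₀ (2 * d) with hRdef
  have hGR : G ⊆ ball ζ₀ R := hR₀.trans (ball_subset_ball (le_max_left _ _))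
  have hRd : 2 * d ≤ R := le_max_right _ _
  have hR : 0 < R := by linarith
  have hM : 0 < Real.log (R / d) := Real.log_pos ((one_lt_div hd0).2 (by linarith))
  refine ⟨c / (2 * Real.log (R / d)), by positivity, ?_⟩
  intro ζ hζ g g₀ hg hg₀
  set C := c / (2 * Real.log (R / d)) with hC
  have hCpos : 0 < C := by positivity
  set U : Set ℂ := G ∩ {z | d < Metric.infDist z K} with hU
  have hUo : IsOpen U := hGopen.inter (isOpen_lt continuous_const hcont)
  have hoff : ∀ ξ ∈ K, ∀ z, d ≤ Metric.infDist z K → z ≠ ξ := by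
    rintro ξ hξ z hz rfl
    rw [Metric.infDist_zero_of_mem hξ] at hz
    linarith
  have key := min_principle_s8 hUo (hGbdd.subset inter_subset_left)
    (hop_comb (hop_mono hg.harmonic hUo (fun z hz => ⟨hz.1, hoff ζ hζ z (le_of_lt hz.2)⟩))
      (hop_mono hg₀.harmonic hUo (fun z hz => ⟨hz.1, hoff ζ₀ hζ₀K z (le_of_lt hz.2)⟩)) 1 C) ?_
  · intro z hz hzd
    have := key z ⟨hz, lt_of_le_of_lt hdδ hzd⟩
    linarith
  intro t htc htU ε hε
  have htd : d ≤ Metric.infDist t K := by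
    have h1 : IsClosed {z | d ≤ Metric.infDist z K} := isClosed_le continuous_const hcont
    exact closure_minimal (fun z hz => (show d ≤ Metric.infDist z K from le_of_lt hz.2)) h1 htc
  by_cases htG : t ∈ G
  · have hteq : Metric.infDist t K = d := by
      refine le_antisymm ?_ htd
      by_contra! h
      exact htU ⟨htG, h⟩
    have hne := hoff ζ hζ t htd
    have hne₀ := hoff ζ₀ hζ₀K t htd
    have h1 := Hc ζ hζ g hg t (hmemS t hteq.le) hne
    have h2 := green_upper hGopen hGbdd hζ₀ hR hGR hg₀ t ⟨htG, hne₀⟩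
    have h3 : d ≤ dist t ζ₀ := htd.trans (Metric.infDist_le_dist_of_mem hζ₀K)
    have h4 : Real.log (R / dist t ζ₀) ≤ Real.log (R / d) := by
      have : 0 < dist t ζ₀ := by linarith
      apply Real.log_le_log (by positivity)
      gcongr
    have h5 : C * g₀ t ≤ c := by
      calc C * g₀ t ≤ C * (2 * Real.log (R / d)) := by gcongr; linarith
        _ = c := by rw [hC]; field_simp
    have h6 : ContinuousAt (fun z => 1 * g z - C * g₀ z) t :=
      (continuousAt_const.mul (hop_cont hg.harmonic ⟨htG, hne⟩)).sub
        (continuousAt_const.mul (hop_cont hg₀.harmonic ⟨htG, hne₀⟩))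
    exact (h6.eventually (lt_mem_nhds (by linarith))).filter_mono nhdsWithin_le_nhds
  · have htf : t ∈ frontier G := by
      rw [frontier, hGopen.interior_eq]
      exact ⟨closure_mono inter_subset_left htc, htG⟩
    have h1 := (hg₀.boundaryLimit t htf).mono_left (nhdsWithin_mono t
      (inter_subset_left : U ⊆ G))
    filter_upwards [h1.eventually (gt_mem_nhds (div_pos hε hCpos)), self_mem_nhdsWithin]
      with z h2 h3
    have h4 := hg.pos z ⟨h3.1, hoff ζ hζ z (le_of_lt h3.2)⟩
    rw [lt_div_iff₀ hCpos] at h2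
    linarith
end

section
/- Let G be a bounded simply connected domain whose boundary contains the origin as an NCS point, with associated closed disk D̄ := {z : |z − iγ| ≤ γ} for some γ ∈ (0,1), so that D̄∖{0} ⊂ G and g_G(iy, iγ)/y → +∞ as y → 0+. Let K ⊂ G be a compact set with K ∩ D̄ = ∅ and let μ₀ be a positive Borel measure on K with μ₀(K) > 0. Then lim_{y→0+} (1/y) ∫ g_G(iy, ζ) dμ₀(ζ) = +∞. -/
open MeasureTheory Filter Metric Set Polynomial Topology
open scoped ENNReal Classical

/-- Local harmonicity: locally the real part of an analytic function. -/
def LocHarm (u : ℂ → ℝ) (z : ℂ) : Prop :=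
  ∃ f : ℂ → ℂ, AnalyticAt ℂ f z ∧ ∀ᶠ w in 𝓝 z, u w = (f w).re

lemma LocHarm.of_plane {u : ℂ → ℝ} {s : Set ℂ} (h : HarmonicOnPlane u s) {z : ℂ} (hz : z ∈ s) :
    LocHarm u z := by
  obtain ⟨ε, hε, -, f, hf, hu⟩ := h z hz
  exact ⟨f, hf z (mem_ball_self hε), Filter.eventually_of_mem (ball_mem_nhds z hε) hu⟩

lemma LocHarm.add {u v : ℂ → ℝ} {z : ℂ} (hu : LocHarm u z) (hv : LocHarm v z) :
    LocHarm (fun w => u w + v w) z := by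
  obtain ⟨f, hf, hu⟩ := hu
  obtain ⟨k, hk, hv⟩ := hv
  refine ⟨fun w => f w + k w, hf.add hk, ?_⟩
  filter_upwards [hu, hv] with w h1 h2
  simp [h1, h2]

lemma LocHarm.const_mul {u : ℂ → ℝ} {z : ℂ} (c : ℝ) (hu : LocHarm u z) :
    LocHarm (fun w => c * u w) z := by
  obtain ⟨f, hf, hu⟩ := hu
  refine ⟨fun w => (c : ℂ) * f w, analyticAt_const.mul hf, ?_⟩
  filter_upwards [hu] with w h1
  simp [h1]

lemma LocHarm.log_dist {a z : ℂ} (h : z ≠ a) : LocHarm (fun w => Real.log (dist w a)) z := by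
  have hza : z - a ≠ 0 := sub_ne_zero.mpr h
  refine ⟨fun w => Complex.log ((w - a) / (z - a)) + (Real.log (dist z a) : ℂ), ?_, ?_⟩
  · refine AnalyticAt.add (AnalyticAt.clog ?_ ?_) analyticAt_const
    · exact (analyticAt_id.sub analyticAt_const).div analyticAt_const hza
    · simp [div_self hza]
  · filter_upwards [isOpen_ne.mem_nhds h] with w hw
    have hwa : w - a ≠ 0 := sub_ne_zero.mpr hw
    rw [Complex.add_re, Complex.log_re, Complex.ofReal_re, norm_div,
      Real.log_div (norm_ne_zero_iff.mpr hwa) (norm_ne_zero_iff.mpr hza), dist_eq_norm, dist_eq_norm]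
    ring

lemma LocHarm.continuousAt {u : ℂ → ℝ} {z : ℂ} (hu : LocHarm u z) : ContinuousAt u z := by
  obtain ⟨f, hf, hu⟩ := hu
  exact (Complex.continuous_re.continuousAt.comp hf.continuousAt).congr
    (hu.mono fun w hw => hw.symm)

lemma LocHarm.eq_of_max {u : ℂ → ℝ} {z : ℂ} (hu : LocHarm u z) (hm : IsLocalMax u z) :
    ∀ᶠ w in 𝓝 z, u w = u z := by
  obtain ⟨f, hf, hu⟩ := hu
  have hz := hu.self_of_nhds
  have h1 : AnalyticAt ℂ (fun w => Complex.exp (f w)) z := hf.cexp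
  have h2 : ∀ᶠ w in 𝓝 z, DifferentiableAt ℂ (fun w => Complex.exp (f w)) w :=
    h1.eventually_analyticAt.mono fun w hw => hw.differentiableAt
  have h3 : IsLocalMax (norm ∘ fun w => Complex.exp (f w)) z := by
    filter_upwards [hm, hu] with w hw hw'
    simp only [Function.comp, Complex.norm_exp]
    rw [← hw', ← hz]
    exact Real.exp_le_exp.mpr hw
  filter_upwards [Complex.eventually_eq_of_isLocalMax_norm h2 h3, hu] with w hw hw'
  have := congrArg norm hw
  simp only [Complex.norm_exp] at this
  rw [hw', hz, Real.exp_injective this]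

/-- Maximum principle on bounded open sets. -/
lemma max_principle {U : Set ℂ} (hU : IsOpen U) (hb : Bornology.IsBounded U) {u : ℂ → ℝ}
    (hu : ∀ z ∈ U, LocHarm u z) {M : ℝ}
    (hbd : ∀ t ∈ closure U, t ∉ U → ∀ᶠ z in 𝓝[U] t, u z ≤ M) : ∀ z ∈ U, u z ≤ M := by
  intro z₀ hz₀
  by_contra! hcon
  have hcl : ∀ c, M < c → IsClosed {z | z ∈ U ∧ c ≤ u z} := by
    intro c hc
    refine isClosed_of_closure_subset fun w hw => ?_
    have hwc : w ∈ closure U := closure_mono (fun z hz => hz.1) hw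
    rw [mem_closure_iff_frequently] at hw
    by_cases hwU : w ∈ U
    · refine ⟨hwU, ?_⟩
      by_contra! hlt
      have := (hu w hwU).continuousAt.eventually_lt continuousAt_const hlt
      obtain ⟨z, hz1, hz2⟩ := (hw.and_eventually this).exists
      linarith [hz1.2]
    · have := eventually_nhdsWithin_iff.mp (hbd w hwc hwU)
      obtain ⟨z, hz1, hz2⟩ := (hw.and_eventually this).exists
      linarith [hz1.2, hz2 hz1.1]
  have hS : IsCompact {z | z ∈ U ∧ u z₀ ≤ u z} :=
    Metric.isCompact_of_isClosed_isBounded (hcl _ hcon) (hb.subset fun z hz => hz.1)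
  obtain ⟨m, hm, hmax⟩ := hS.exists_isMaxOn ⟨z₀, hz₀, le_rfl⟩
    (f := u) (fun z hz => (hu z hz.1).continuousAt.continuousWithinAt)
  have hmax' : ∀ z ∈ U, u z ≤ u m := by
    intro z hz
    rcases le_total (u z₀) (u z) with h | h
    · exact hmax ⟨hz, h⟩
    · exact h.trans hm.2
  have hopen : IsOpen {z | z ∈ U ∧ u m ≤ u z} := by
    rw [isOpen_iff_mem_nhds]
    rintro z ⟨hz, hz2⟩
    have hlm : IsLocalMax u z := by
      filter_upwards [hU.mem_nhds hz] with w hw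
      exact (hmax' w hw).trans hz2
    filter_upwards [hU.mem_nhds hz, (hu z hz).eq_of_max hlm] with w hw hw2
    exact ⟨hw, hw2 ▸ hz2⟩
  have hclopen : IsClopen {z | z ∈ U ∧ u m ≤ u z} := ⟨hcl _ (hcon.trans_le hm.2), hopen⟩
  have huniv := hclopen.eq_univ ⟨m, hm.1, le_rfl⟩
  have : Bornology.IsBounded (Set.univ : Set ℂ) := huniv ▸ hb.subset fun z hz => hz.1
  exact NormedSpace.unbounded_univ ℝ ℂ this

lemma mem_frontier_of {G : Set ℂ} (hG : IsOpen G) {t : ℂ} (h1 : t ∈ closure G) (h2 : t ∉ G) :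
    t ∈ frontier G := by
  rw [hG.frontier_eq]; exact ⟨h1, h2⟩

/-- Near its pole a Green function is above any bound. -/
lemma IsGreenFunction.tendsto_pole {G : Set ℂ} {ζ : ℂ} {g : ℂ → ℝ} (hg : IsGreenFunction G ζ g)
    (B : ℝ) : ∀ᶠ z in 𝓝[G \ {ζ}] ζ, B ≤ g z := by
  obtain ⟨C, hC⟩ := hg.logBounded
  have h1 : Tendsto (fun z => dist z ζ) (𝓝[G \ {ζ}] ζ) (𝓝[>] 0) := by
    refine tendsto_nhdsWithin_iff.mpr ⟨?_, ?_⟩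
    · have : Tendsto (fun z => dist z ζ) (𝓝 ζ) (𝓝 (dist ζ ζ)) :=
        (continuous_id.dist continuous_const).tendsto ζ
      rw [dist_self] at this
      exact this.mono_left nhdsWithin_le_nhds
    · filter_upwards [self_mem_nhdsWithin] with z hz
      exact dist_pos.mpr hz.2
  have h2 := (Real.tendsto_log_nhdsGT_zero.comp h1).eventually (eventually_le_atBot (-C - B))
  filter_upwards [hC, h2] with z h3 h4
  have := (abs_le.mp h3).1
  simp only [Function.comp] at h4
  linarith

/-- Comparison of two Green functions away from one of the poles. -/
lemma green_compare_s14 {G : Set ℂ} (hG : IsOpen G) (hb : Bornology.IsBounded G) {a ζ : ℂ}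
    (ha : a ∈ G) (hζ : ζ ∈ G) (hne : ζ ≠ a) {ga gζ : ℂ → ℝ} (hga : IsGreenFunction G a ga)
    (hgζ : IsGreenFunction G ζ gζ) {ρ : ℝ} (hρ : 0 < ρ) :
    ∃ c > 0, ∀ z ∈ G, ρ ≤ dist z a → z ≠ ζ → c * ga z ≤ gζ z := by
  obtain ⟨r₁, hr₁, hball⟩ := Metric.isOpen_iff.mp hG a ha
  obtain ⟨r, hr, hrlt⟩ : ∃ r > 0, r < min r₁ (min ρ (dist ζ a)) :=
    exists_between (lt_min hr₁ (lt_min hρ (dist_pos.mpr hne)))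
  have hrr₁ : r < r₁ := hrlt.trans_le (min_le_left _ _)
  have hrρ : r < ρ := hrlt.trans_le ((min_le_right _ _).trans (min_le_left _ _))
  have hrζ : r < dist ζ a := hrlt.trans_le ((min_le_right _ _).trans (min_le_right _ _))
  have hsG : sphere a r ⊆ G := fun z hz => hball (by rw [mem_ball, mem_sphere.mp hz]; exact hrr₁)
  have hsa : ∀ z ∈ sphere a r, z ≠ a := fun z hz h => by
    rw [h, mem_sphere, dist_self] at hz; linarith
  have hsζ : ∀ z ∈ sphere a r, z ≠ ζ := fun z hz h => by
    rw [h, mem_sphere] at hz; linarith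
  have hHa : ∀ z ∈ G, z ≠ a → LocHarm ga z := fun z hz h => LocHarm.of_plane hga.harmonic ⟨hz, h⟩
  have hHζ : ∀ z ∈ G, z ≠ ζ → LocHarm gζ z := fun z hz h => LocHarm.of_plane hgζ.harmonic ⟨hz, h⟩
  have hne' : (sphere a r).Nonempty := NormedSpace.sphere_nonempty.mpr hr.le
  obtain ⟨p, hp, hpmax⟩ := (isCompact_sphere a r).exists_isMaxOn hne' (f := ga)
    (fun z hz => (hHa z (hsG hz) (hsa z hz)).continuousAt.continuousWithinAt)
  obtain ⟨q, hq, hqmin⟩ := (isCompact_sphere a r).exists_isMinOn hne' (f := gζ)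
    (fun z hz => (hHζ z (hsG hz) (hsζ z hz)).continuousAt.continuousWithinAt)
  have hM : 0 < ga p := hga.pos p ⟨hsG hp, hsa p hp⟩
  have hm : 0 < gζ q := hgζ.pos q ⟨hsG hq, hsζ q hq⟩
  set c := gζ q / ga p with hc
  have hcpos : 0 < c := div_pos hm hM
  refine ⟨c, hcpos, fun z hz hzρ hzζ => ?_⟩
  set U : Set ℂ := G \ (closedBall a r ∪ {ζ}) with hUdef
  have hU : IsOpen U := hG.sdiff (isClosed_closedBall.union isClosed_singleton)
  have hUG : U ⊆ G := sdiff_subset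
  have hzU : z ∈ U := ⟨hz, by
    rintro (h | h)
    · rw [mem_closedBall] at h; linarith
    · exact hzζ h⟩
  have hUa : ∀ w ∈ U, w ≠ a := fun w hw h => hw.2 (Or.inl (h ▸ mem_closedBall_self hr.le))
  have hUζ : ∀ w ∈ U, w ≠ ζ := fun w hw h => hw.2 (Or.inr h)
  have key : ∀ ε > 0, ∀ w ∈ U, c * ga w + (-1) * gζ w ≤ ε := by
    intro ε hε
    refine max_principle hU (hb.subset hUG) (fun w hw =>
      ((hHa w hw.1 (hUa w hw)).const_mul c).add ((hHζ w hw.1 (hUζ w hw)).const_mul (-1))) ?_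
    intro t htc htU
    by_cases htG : t ∈ G
    · by_cases htζ : t = ζ
      · have hta : t ≠ a := htζ ▸ hne
        have h1 : ∀ᶠ w in 𝓝[U] t, c * ga w < c * ga t + 1 :=
          ((((hHa t htG hta).const_mul c).continuousAt).eventually_lt continuousAt_const
            (by linarith)).filter_mono nhdsWithin_le_nhds
        have h2 := (hgζ.tendsto_pole (c * ga t + 1)).filter_mono
          (nhdsWithin_mono ζ (fun w hw => ⟨hw.1, hUζ w hw⟩ : U ⊆ G \ {ζ}))
        rw [← htζ] at h2
        filter_upwards [h1, h2] with w h3 h4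
        linarith
      · have htb : t ∈ closedBall a r := by
          by_contra h
          exact htU ⟨htG, by rintro (h' | h'); exacts [h h', htζ h']⟩
        have hts : t ∈ sphere a r := by
          rw [mem_sphere]
          refine le_antisymm (mem_closedBall.mp htb) ?_
          by_contra! hlt
          obtain ⟨w, hw1, hw2⟩ := mem_closure_iff.mp htc (ball a r) isOpen_ball hlt
          exact hw2.2 (Or.inl (ball_subset_closedBall hw1))
        have hle : c * ga t + (-1) * gζ t < ε := by
          have h1 : ga t ≤ ga p := hpmax hts
          have h2 : gζ q ≤ gζ t := hqmin hts
          have h3 : c * ga t ≤ c * ga p := by gcongr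
          have h4 : c * ga p = gζ q := by rw [hc]; field_simp
          linarith
        exact (((((hHa t htG (hsa t hts)).const_mul c).add ((hHζ t htG htζ).const_mul
          (-1))).continuousAt.eventually_lt continuousAt_const hle).filter_mono
          nhdsWithin_le_nhds).mono fun w hw => hw.le
    · have htf := mem_frontier_of hG (closure_mono hUG htc) htG
      have h1 := ((hga.boundaryLimit t htf).const_mul c).add
        ((hgζ.boundaryLimit t htf).const_mul (-1))
      have h2 := h1.mono_left (nhdsWithin_mono t hUG)
      exact h2.eventually (eventually_le_nhds (by simpa using hε))
  have := le_of_forall_pos_le_add (a := c * ga z + (-1) * gζ z) (b := 0)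
    (fun ε hε => by simpa using key ε hε z hzU)
  linarith

/-- Dependence on the pole. -/
lemma green_pole_diff {G : Set ℂ} (hG : IsOpen G) (hb : Bornology.IsBounded G) {a b : ℂ}
    (ha : a ∈ G) (hbG : b ∈ G) (hne : a ≠ b) {ga gb : ℂ → ℝ} (hga : IsGreenFunction G a ga)
    (hgb : IsGreenFunction G b gb) {M : ℝ}
    (hM : ∀ t ∈ frontier G, Real.log (dist t a) - Real.log (dist t b) ≤ M) {z : ℂ} (hz : z ∈ G)
    (hza : z ≠ a) (hzb : z ≠ b) :
    ga z - gb z ≤ M + Real.log (dist z b) - Real.log (dist z a) := by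
  obtain ⟨R, hR⟩ := Metric.isBounded_iff.mp hb
  set L : ℝ := Real.log R with hL
  have hlogle : ∀ p ∈ G, ∀ w ∈ G, w ≠ p → Real.log (dist w p) ≤ L := fun p hp w hw hwp =>
    Real.log_le_log (dist_pos.mpr hwp) (hR hw hp)
  set U : Set ℂ := G \ {a, b} with hUdef
  have hU : IsOpen U := hG.sdiff (Set.toFinite _).isClosed
  have hUG : U ⊆ G := sdiff_subset
  have hUa : ∀ w ∈ U, w ≠ a := fun w hw h => hw.2 (Or.inl h)
  have hUb : ∀ w ∈ U, w ≠ b := fun w hw h => hw.2 (Or.inr h)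
  have hzU : z ∈ U := ⟨hz, by rintro (h | h); exacts [hza h, hzb h]⟩
  have hHa : ∀ w ∈ G, w ≠ a → LocHarm ga w := fun w hw h => LocHarm.of_plane hga.harmonic ⟨hw, h⟩
  have hHb : ∀ w ∈ G, w ≠ b → LocHarm gb w := fun w hw h => LocHarm.of_plane hgb.harmonic ⟨hw, h⟩
  have hlogbot : ∀ p, ∀ V : Set ℂ, (∀ w ∈ V, w ≠ p) →
      Tendsto (fun w => Real.log (dist w p)) (𝓝[V] p) atBot := by
    intro p V hV
    refine Real.tendsto_log_nhdsGT_zero.comp (tendsto_nhdsWithin_iff.mpr ⟨?_, ?_⟩)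
    · have : Tendsto (fun z => dist z p) (𝓝 p) (𝓝 (dist p p)) :=
        (continuous_id.dist continuous_const).tendsto p
      rw [dist_self] at this
      exact this.mono_left nhdsWithin_le_nhds
    · filter_upwards [self_mem_nhdsWithin] with w hw
      exact dist_pos.mpr (hV w hw)
  have key : ∀ ε > 0, ∀ δ > 0, ∀ w ∈ U,
      ((ga w + Real.log (dist w a)) + (-1) * (gb w + Real.log (dist w b))) +
        ε * (Real.log (dist w a) + Real.log (dist w b)) ≤ M + δ + ε * (2 * L) := by
    intro ε hε δ hδ
    refine max_principle hU (hb.subset hUG) (fun w hw =>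
      (((hHa w hw.1 (hUa w hw)).add (LocHarm.log_dist (hUa w hw))).add
        (((hHb w hw.1 (hUb w hw)).add (LocHarm.log_dist (hUb w hw))).const_mul (-1))).add
        (((LocHarm.log_dist (hUa w hw)).add (LocHarm.log_dist (hUb w hw))).const_mul ε)) ?_
    intro t htc htU
    by_cases htG : t ∈ G
    · by_cases hta : t = a
      · subst hta
        obtain ⟨C, hC⟩ := hga.logBounded
        have h1 := hC.filter_mono
          (nhdsWithin_mono t (fun w hw => ⟨hw.1, hUa w hw⟩ : U ⊆ G \ {t}))
        have h2 : ∀ᶠ w in 𝓝[U] t, (-1) * (gb w + Real.log (dist w b)) <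
            (-1) * (gb t + Real.log (dist t b)) + 1 :=
          ((((hHb t ha hne).add (LocHarm.log_dist hne)).const_mul (-1)).continuousAt.eventually_lt
            continuousAt_const (by linarith)).filter_mono nhdsWithin_le_nhds
        have h3 := (hlogbot t U hUa).eventually (eventually_le_atBot
          ((M + δ + ε * L - C - ((-1) * (gb t + Real.log (dist t b)) + 1)) / ε))
        filter_upwards [h1, h2, h3, self_mem_nhdsWithin] with w h4 h5 h6 h7
        have h8 := mul_le_mul_of_nonneg_left (hlogle b hbG w h7.1 (hUb w h7)) hε.le
        rw [le_div_iff₀ hε] at h6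
        have h9 := (abs_le.mp h4).2
        nlinarith
      · have htb : t = b := by
          by_contra h
          exact htU ⟨htG, by rintro (h' | h'); exacts [hta h', h h']⟩
        subst htb
        obtain ⟨C, hC⟩ := hgb.logBounded
        have h1 := hC.filter_mono
          (nhdsWithin_mono t (fun w hw => ⟨hw.1, hUb w hw⟩ : U ⊆ G \ {t}))
        have h2 : ∀ᶠ w in 𝓝[U] t, (ga w + Real.log (dist w a)) <
            (ga t + Real.log (dist t a)) + 1 :=
          (((hHa t hbG hta).add (LocHarm.log_dist hta)).continuousAt.eventually_lt
            continuousAt_const (by linarith)).filter_mono nhdsWithin_le_nhds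
        have h3 := (hlogbot t U hUb).eventually (eventually_le_atBot
          ((M + δ + ε * L - C - ((ga t + Real.log (dist t a)) + 1)) / ε))
        filter_upwards [h1, h2, h3, self_mem_nhdsWithin] with w h4 h5 h6 h7
        have h8 := mul_le_mul_of_nonneg_left (hlogle a ha w h7.1 (hUa w h7)) hε.le
        rw [le_div_iff₀ hε] at h6
        have h9 := (abs_le.mp h4).1
        nlinarith
    · have htf := mem_frontier_of hG (closure_mono hUG htc) htG
      have hta : t ≠ a := fun h => htG (h ▸ ha)
      have htb : t ≠ b := fun h => htG (h ▸ hbG)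
      have l1 : Tendsto (fun w => Real.log (dist w a)) (𝓝[U] t) (𝓝 (Real.log (dist t a))) :=
        (LocHarm.log_dist hta).continuousAt.tendsto.mono_left nhdsWithin_le_nhds
      have l2 : Tendsto (fun w => Real.log (dist w b)) (𝓝[U] t) (𝓝 (Real.log (dist t b))) :=
        (LocHarm.log_dist htb).continuousAt.tendsto.mono_left nhdsWithin_le_nhds
      have l3 := (((hga.boundaryLimit t htf).mono_left (nhdsWithin_mono t hUG)).add l1).add
        ((((hgb.boundaryLimit t htf).mono_left (nhdsWithin_mono t hUG)).add l2).const_mul (-1))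
      have l4 := l3.eventually (eventually_le_nhds (b := M + δ) (by
        have := hM t htf
        linarith))
      filter_upwards [l4, self_mem_nhdsWithin] with w h4 h7
      have h8 := mul_le_mul_of_nonneg_left (hlogle a ha w h7.1 (hUa w h7)) hε.le
      have h9 := mul_le_mul_of_nonneg_left (hlogle b hbG w h7.1 (hUb w h7)) hε.le
      nlinarith
  have lim : Tendsto (fun ε : ℝ => M + ε + ε * (2 * L) -
      ε * (Real.log (dist z a) + Real.log (dist z b))) (𝓝[>] 0) (𝓝 M) := by
    have : ContinuousAt (fun ε : ℝ => M + ε + ε * (2 * L) -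
      ε * (Real.log (dist z a) + Real.log (dist z b))) 0 := by fun_prop
    have h := this.tendsto
    simp only [add_zero, zero_mul, sub_zero] at h
    exact h.mono_left nhdsWithin_le_nhds
  have := ge_of_tendsto lim (b := (ga z + Real.log (dist z a)) +
      (-1) * (gb z + Real.log (dist z b))) (by
    filter_upwards [self_mem_nhdsWithin] with ε hε
    have := key ε hε ε hε z hzU
    linarith)
  linarith

lemma log_ratio_bound {x y d e : ℝ} (hd : 0 < d) (hy : d ≤ y) (hx : 0 < x) (h : x ≤ y + e)
    (he : 0 ≤ e) : Real.log x - Real.log y ≤ e / d := by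
  have hy0 : 0 < y := hd.trans_le hy
  rw [← Real.log_div hx.ne' hy0.ne']
  have h1 := Real.log_le_sub_one_of_pos (div_pos hx hy0)
  have h2 : x / y ≤ 1 + e / y := by
    rw [div_le_iff₀ hy0, add_mul, div_mul_cancel₀ _ hy0.ne']; linarith
  have h3 : e / y ≤ e / d := by gcongr
  linarith

lemma green_continuous_pole {G : Set ℂ} (hG : IsOpen G) (hb : Bornology.IsBounded G)
    {g : ℂ → ℂ → ℝ} (hg : ∀ ζ ∈ G, IsGreenFunction G ζ (g ζ)) {z ζ : ℂ} (hz : z ∈ G)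
    (hζ : ζ ∈ G) (hne : z ≠ ζ) : ContinuousAt (fun ξ => g ξ z) ζ := by
  obtain ⟨d, hd, hball⟩ := Metric.isOpen_iff.mp hG ζ hζ
  have hfr : ∀ t ∈ frontier G, d ≤ dist t ζ := by
    intro t ht
    by_contra! h
    rw [hG.frontier_eq] at ht
    exact ht.2 (hball h)
  have hlog : Tendsto (fun ξ => Real.log (dist z ξ)) (𝓝 ζ) (𝓝 (Real.log (dist z ζ))) := by
    have : ContinuousAt (fun ξ => Real.log (dist z ξ)) ζ :=
      ContinuousAt.log (continuous_const.dist continuous_id).continuousAt (dist_pos.mpr hne).ne'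
    exact this
  have hdist : Tendsto (fun ξ => dist ξ ζ) (𝓝 ζ) (𝓝 0) := by
    have : Tendsto (fun ξ => dist ξ ζ) (𝓝 ζ) (𝓝 (dist ζ ζ)) :=
        (continuous_id.dist continuous_const).tendsto ζ
    rwa [dist_self] at this
  have hU : Tendsto (fun ξ => g ζ z + (dist ξ ζ / (d / 2) + Real.log (dist z ζ)
      - Real.log (dist z ξ))) (𝓝 ζ) (𝓝 (g ζ z)) := by
    have := (((hdist.div_const (d / 2)).add_const (Real.log (dist z ζ))).sub hlog).const_add (g ζ z)
    simpa using this
  have hL : Tendsto (fun ξ => g ζ z - (dist ξ ζ / (d / 2) + Real.log (dist z ξ)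
      - Real.log (dist z ζ))) (𝓝 ζ) (𝓝 (g ζ z)) := by
    have := (((hdist.div_const (d / 2)).add hlog).sub_const (Real.log (dist z ζ))).const_sub (g ζ z)
    simpa using this
  have hev : ∀ᶠ ξ in 𝓝 ζ, ξ ∈ G ∧ dist ξ ζ < d / 2 ∧ z ≠ ξ :=
    (hG.eventually_mem hζ).and ((hdist.eventually_lt_const (half_pos hd)).and
      ((isOpen_ne.eventually_mem hne.symm).mono fun ξ h => Ne.symm h))
  refine tendsto_of_tendsto_of_tendsto_of_le_of_le' hL hU ?_ ?_
  · filter_upwards [hev] with ξ ⟨hξ, hξd, hzξ⟩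
    by_cases h : ξ = ζ
    · subst h; simp
    have := green_pole_diff hG hb hζ hξ (Ne.symm h) (hg ζ hζ) (hg ξ hξ)
      (M := dist ξ ζ / (d / 2)) (fun t ht => by
        have h1 := hfr t ht
        have h2 := dist_triangle t ξ ζ
        exact log_ratio_bound (half_pos hd) (by linarith) (by linarith) h2 dist_nonneg) hz hne hzξ
    linarith
  · filter_upwards [hev] with ξ ⟨hξ, hξd, hzξ⟩
    by_cases h : ξ = ζ
    · subst h; simp
    have := green_pole_diff hG hb hξ hζ h (hg ξ hξ) (hg ζ hζ)
      (M := dist ξ ζ / (d / 2)) (fun t ht => by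
        have h1 := hfr t ht
        have h2 := dist_triangle t ξ ζ
        have h3 := dist_triangle_right t ξ ζ
        have h4 := dist_triangle t ζ ξ
        rw [dist_comm ζ ξ] at h4
        exact log_ratio_bound (half_pos hd) (by linarith) (by linarith) h4 dist_nonneg) hz hzξ hne
    linarith

/-- **The limit (4.6)–(4.8).** Let `G` be a bounded simply connected domain whose boundary
contains the origin as an NCS point, with associated closed disk `D̄ = {|z - iγ| ≤ γ}`,
`γ ∈ (0,1)`, so that `D̄ ∖ {0} ⊆ G` and `g_G(iy, iγ)/y → +∞` as `y → 0+`. If `K ⊆ G` is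
compact with `K ∩ D̄ = ∅` and `μ₀` is a positive finite Borel measure on `K`, then
`(1/y) ∫ g_G(iy, ζ) dμ₀(ζ) → +∞` as `y → 0+`. -/
theorem green_potential_limit_at_NCS
    (G : Set ℂ) (hGopen : IsOpen G) (hGconn : IsConnected G)
    (hGbdd : Bornology.IsBounded G) (hGsc : SimplyConnectedSpace G)
    (γ : ℝ) (hγ : γ ∈ Set.Ioo (0 : ℝ) 1)
    (h0 : (0 : ℂ) ∈ frontier G)
    (hdisk : Metric.closedBall ((γ : ℂ) * Complex.I) γ \ {0} ⊆ G)
    (g : ℂ → ℂ → ℝ) (hg : ∀ ζ ∈ G, IsGreenFunction G ζ (g ζ))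
    (hNCS : IsNCSPoint G 0)
    (hlim : Tendsto (fun y : ℝ => g ((γ : ℂ) * Complex.I) ((y : ℂ) * Complex.I) / y)
      (𝓝[>] (0 : ℝ)) atTop)
    (K : Set ℂ) (hK : IsCompact K) (hKG : K ⊆ G)
    (hKD : K ∩ Metric.closedBall ((γ : ℂ) * Complex.I) γ = ∅)
    (μ₀ : Measure ℂ) [IsFiniteMeasure μ₀] (hμ₀supp : μ₀ Kᶜ = 0) (hμ₀pos : 0 < μ₀ K) :
    Tendsto (fun y : ℝ => (∫ ζ, g ζ ((y : ℂ) * Complex.I) ∂μ₀) / y)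
      (𝓝[>] (0 : ℝ)) atTop := by
  obtain ⟨hγ0, hγ1⟩ := hγ
  set a : ℂ := (γ : ℂ) * Complex.I with ha_def
  have haD : a ∈ Metric.closedBall a γ := mem_closedBall_self hγ0.le
  have ha0 : a ≠ 0 := mul_ne_zero (Complex.ofReal_ne_zero.mpr hγ0.ne') Complex.I_ne_zero
  have haG : a ∈ G := hdisk ⟨haD, ha0⟩
  have hKa : ∀ ζ ∈ K, ∀ z ∈ Metric.closedBall a γ, z ≠ ζ := by
    rintro ζ hζ z hz rfl
    exact (Set.eq_empty_iff_forall_notMem.mp hKD) z ⟨hζ, hz⟩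
  have hdist : ∀ y : ℝ, dist ((y : ℂ) * Complex.I) a = |y - γ| := by
    intro y
    rw [ha_def, dist_eq_norm, ← sub_mul, norm_mul, Complex.norm_I, mul_one, ← Complex.ofReal_sub,
      Complex.norm_real, Real.norm_eq_abs]
  have hyev : ∀ᶠ y : ℝ in 𝓝[>] 0, 0 < y ∧ y < γ / 2 :=
    Ioo_mem_nhdsGT (half_pos hγ0)
  have hyD : ∀ y : ℝ, 0 < y ∧ y < γ / 2 → (y : ℂ) * Complex.I ∈ Metric.closedBall a γ := by
    intro y hy
    rw [mem_closedBall, hdist, abs_le]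
    constructor <;> linarith [hy.1, hy.2]
  have hyG : ∀ y : ℝ, 0 < y ∧ y < γ / 2 → (y : ℂ) * Complex.I ∈ G := by
    intro y hy
    exact hdisk ⟨hyD y hy,
      mul_ne_zero (Complex.ofReal_ne_zero.mpr hy.1.ne') Complex.I_ne_zero⟩
  have hpt : ∀ ζ ∈ K, Tendsto (fun y : ℝ => g ζ ((y : ℂ) * Complex.I) / y) (𝓝[>] 0) atTop := by
    intro ζ hζ
    obtain ⟨c, hc, hcmp⟩ := green_compare_s14 hGopen hGbdd haG (hKG hζ) (hKa ζ hζ a haD).symm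
      (hg a haG) (hg ζ (hKG hζ)) (half_pos hγ0)
    refine tendsto_atTop_mono' _ ?_ (hlim.const_mul_atTop hc)
    filter_upwards [hyev] with y hy
    have h1 := hcmp _ (hyG y hy) (by
      rw [hdist, abs_sub_comm]
      exact le_trans (by linarith [hy.2]) (le_abs_self _)) (hKa ζ hζ _ (hyD y hy))
    rw [← mul_div_assoc]
    exact div_le_div_of_nonneg_right h1 hy.1.le
  have hrestr : μ₀.restrict K = μ₀ := by
    rw [Measure.restrict_eq_self_of_ae_mem]
    exact hμ₀supp
  have haeK : ∀ᵐ ζ ∂μ₀, ζ ∈ K := hμ₀supp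
  have hint : ∀ y : ℝ, 0 < y ∧ y < γ / 2 → Integrable (fun ζ => g ζ ((y : ℂ) * Complex.I)) μ₀ := by
    intro y hy
    have hcont : ContinuousOn (fun ζ => g ζ ((y : ℂ) * Complex.I)) K := fun ζ hζ =>
      (green_continuous_pole hGopen hGbdd hg (hyG y hy) (hKG hζ)
        (hKa ζ hζ _ (hyD y hy))).continuousWithinAt
    have := hcont.integrableOn_compact (μ := μ₀) hK
    rwa [IntegrableOn, hrestr] at this
  refine tendsto_of_seq_tendsto fun s hs => ?_
  obtain ⟨N, hN⟩ := eventually_atTop.mp (hs.eventually hyev)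
  rw [← tendsto_add_atTop_iff_nat N]
  have hs' : ∀ n, 0 < s (n + N) ∧ s (n + N) < γ / 2 := fun n => hN _ (Nat.le_add_left _ _)
  have hint' : ∀ n, Integrable
      (fun ζ => g ζ (((s (n + N) : ℝ) : ℂ) * Complex.I) / s (n + N)) μ₀ :=
    fun n => (hint _ (hs' n)).div_const _
  have hsN : Tendsto (fun n => s (n + N)) atTop (𝓝[>] 0) :=
    hs.comp (tendsto_add_atTop_nat N)
  have hfatou := lintegral_liminf_le' (μ := μ₀) (u := atTop)
    (f := fun n ζ => ENNReal.ofReal (g ζ (((s (n + N) : ℝ) : ℂ) * Complex.I) / s (n + N)))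
    (fun n => (hint' n).aestronglyMeasurable.aemeasurable.ennreal_ofReal)
  have htop : ∫⁻ ζ, liminf (fun n => ENNReal.ofReal
      (g ζ (((s (n + N) : ℝ) : ℂ) * Complex.I) / s (n + N))) atTop ∂μ₀ = ∞ := by
    have : ∫⁻ ζ, liminf (fun n => ENNReal.ofReal
      (g ζ (((s (n + N) : ℝ) : ℂ) * Complex.I) / s (n + N))) atTop ∂μ₀ = ∫⁻ _, ∞ ∂μ₀ := by
      refine lintegral_congr_ae ?_
      filter_upwards [haeK] with ζ hζ
      exact (ENNReal.tendsto_ofReal_nhds_top.mpr ((hpt ζ hζ).comp hsN)).liminf_eq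
    rw [this, lintegral_const, ENNReal.top_mul]
    exact (hμ₀pos.trans_le (measure_mono (subset_univ K))).ne'
  rw [htop, top_le_iff] at hfatou
  have hlimtop : Tendsto (fun n => ∫⁻ ζ, ENNReal.ofReal
      (g ζ (((s (n + N) : ℝ) : ℂ) * Complex.I) / s (n + N)) ∂μ₀) atTop (𝓝 ∞) :=
    tendsto_of_le_liminf_of_limsup_le hfatou.ge le_top
  rw [← ENNReal.tendsto_ofReal_nhds_top]
  refine hlimtop.congr fun n => ?_
  rw [← ofReal_integral_eq_lintegral_ofReal (hint' n), integral_div]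
  · rfl
  filter_upwards [haeK] with ζ hζ
  exact div_nonneg ((hg ζ (hKG hζ)).pos _
    ⟨hyG _ (hs' n), hKa ζ hζ _ (hyD _ (hs' n))⟩).le (hs' n).1.le
end

section
/- Let E ⊂ ℂ be compact, Ω the unbounded component of ℂ̄∖E, and 𝓔 := ℂ̄∖Ω. If E₀ ⊂ 𝓔 is a closed set with dist(E₀, 𝓔∖E₀) > 0, then every connected component of the interior int(E₀) is simply connected. -/
open MeasureTheory Filter Metric Set Polynomial Topology
open scoped ENNReal Classical

/-- Open sets in which every bounded open set with boundary in `G` is contained. -/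
def FullSet (G : Set ℂ) : Prop :=
  ∀ A : Set ℂ, IsOpen A → Bornology.IsBounded A → closure A ⊆ A ∪ G → A ⊆ G

lemma not_clopen_bounded {B : Set ℂ} (ho : IsOpen B) (hc : closure B ⊆ B)
    (hb : Bornology.IsBounded B) : B = ∅ := by
  have hcl : IsClopen B := ⟨isClosed_of_closure_subset hc, ho⟩
  rcases isClopen_iff.1 hcl with h | h
  · exact h
  · subst h
    exact absurd hb (NormedSpace.unbounded_univ ℝ ℂ)

lemma preconn_inside {A C : Set ℂ} (ho : IsOpen A) (hC : IsPreconnected C)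
    (h : C ∩ closure A ⊆ A) (hne : (C ∩ A).Nonempty) : C ⊆ A := by
  refine hC.subset_left_of_subset_union ho isClosed_closure.isOpen_compl
    (Set.disjoint_left.2 fun x hx hx' => hx' (subset_closure hx)) ?_ hne
  intro x hx
  by_cases hxA : x ∈ closure A
  · exact Or.inl (h ⟨hx, hxA⟩)
  · exact Or.inr hxA

lemma full_component (E : Set ℂ) 
    (E₀ : Set ℂ) (hE₀sub : E₀ ⊆ (outerDomain E)ᶜ)
    (hdist : ∃ d > 0, ∀ a ∈ E₀, ∀ b ∈ (outerDomain E)ᶜ \ E₀, d ≤ dist a b)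
    (z : ℂ) : FullSet (connectedComponentIn (interior E₀) z) := by
  intro A hAo hAb hAG
  set G := connectedComponentIn (interior E₀) z with hG
  have hGo : IsOpen G := isOpen_interior.connectedComponentIn
  have hGi : G ⊆ interior E₀ := connectedComponentIn_subset _ _
  have hGE : G ⊆ E₀ := hGi.trans interior_subset
  obtain ⟨d, hd, hdist⟩ := hdist
  have h1 : A ⊆ (outerDomain E)ᶜ := by
    intro q hqA hq
    have hCout : connectedComponentIn Eᶜ q ⊆ outerDomain E := by
      intro w hw
      refine ⟨connectedComponentIn_subset _ _ hw, ?_⟩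
      rw [← connectedComponentIn_eq hw]
      exact hq.2
    have := preconn_inside (A := A) (C := connectedComponentIn Eᶜ q) hAo
      isPreconnected_connectedComponentIn ?_ ⟨q, mem_connectedComponentIn hq.1, hqA⟩
    · exact hq.2 (hAb.subset this)
    · rintro w ⟨hw, hwA⟩
      rcases hAG hwA with h | h
      · exact h
      · exact absurd (hCout hw) (hE₀sub (hGE h))
  have h2 : A ⊆ E₀ := by
    have : A \ E₀ = ∅ := by
      apply not_clopen_bounded _ _ (hAb.subset sdiff_subset)
      · rw [Metric.isOpen_iff]
        rintro q ⟨hqA, hqE⟩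
        obtain ⟨ε, hε, hball⟩ := Metric.isOpen_iff.1 hAo q hqA
        refine ⟨min ε d, lt_min hε hd, fun w hw => ?_⟩
        rw [Metric.mem_ball, lt_min_iff] at hw
        refine ⟨hball hw.1, fun hwE => ?_⟩
        have := hdist w hwE q ⟨h1 hqA, hqE⟩
        linarith [hw.2]
      · intro r hr
        have hrd : r ∉ E₀ := by
          intro hrE
          obtain ⟨b, hb, hrb⟩ := Metric.mem_closure_iff.1 hr d hd
          have := hdist r hrE b ⟨h1 hb.1, hb.2⟩
          linarith
        rcases hAG (closure_mono sdiff_subset hr) with h | h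
        · exact ⟨h, hrd⟩
        · exact absurd (hGE h) hrd
    rwa [Set.sdiff_eq_empty] at this
  have h3 : A ⊆ interior E₀ := interior_maximal h2 hAo
  have : A \ G = ∅ := by
    apply not_clopen_bounded _ _ (hAb.subset sdiff_subset)
    · rw [isOpen_iff_mem_nhds]
      rintro q ⟨hqA, hqG⟩
      filter_upwards [hAo.mem_nhds hqA, (isOpen_interior.connectedComponentIn (x := q)).mem_nhds
        (mem_connectedComponentIn (h3 hqA))] with w hw hw'
      refine ⟨hw, fun hwG => hqG ?_⟩
      rw [hG, connectedComponentIn_eq hwG, ← connectedComponentIn_eq hw']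
      exact mem_connectedComponentIn (h3 hqA)
    · intro r hr
      have hrd : r ∉ G := by
        intro hrE
        obtain ⟨b, hb, hb'⟩ := mem_closure_iff_nhds.1 hr G (hGo.mem_nhds hrE)
        exact hb'.2 hb
      rcases hAG (closure_mono sdiff_subset hr) with h | h
      · exact ⟨h, hrd⟩
      · exact absurd h hrd
  rwa [Set.sdiff_eq_empty] at this

/-! ### Winding angles of polygons -/

/-- Angle under which the oriented segment `u v` is seen from `q`. -/
noncomputable def ang (q u v : ℂ) : ℝ := Complex.arg ((v - q) / (u - q))

/-- Total angle of the polygonal chain `u, l, w` seen from `q`. -/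
noncomputable def chainAng (q : ℂ) : ℂ → List ℂ → ℂ → ℝ
  | u, [], w => ang q u w
  | u, v :: l, w => ang q u v + chainAng q v l w

/-- Trace of the polygonal chain. -/
def trc : ℂ → List ℂ → ℂ → Set ℂ
  | u, [], w => segment ℝ u w
  | u, v :: l, w => segment ℝ u v ∪ trc v l w

lemma slit_of_not_mem {q u v : ℂ} (h : q ∉ segment ℝ u v) :
    (v - q) / (u - q) ∈ Complex.slitPlane := by
  by_contra hn
  rw [Complex.mem_slitPlane_iff, not_or, not_lt, not_not] at hn
  obtain ⟨hre, him⟩ := hn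
  set r : ℝ := ((v - q) / (u - q)).re with hr
  have huq : u - q ≠ 0 := by
    intro h0
    apply h
    rw [← sub_eq_zero.1 h0]
    exact left_mem_segment _ _ _
  have hrr : (v - q) / (u - q) = (r : ℂ) := Complex.ext (by simp [hr]) (by simp [him])
  rw [div_eq_iff huq] at hrr
  apply h
  have h1 : 0 < 1 - r := by linarith
  refine ⟨-r / (1 - r), 1 / (1 - r), div_nonneg (by linarith) h1.le, by positivity, ?_, ?_⟩
  · field_simp; ring
  · have h2 : (1 - r : ℂ) ≠ 0 := by exact_mod_cast h1.ne'
    simp only [Complex.real_smul]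
    push_cast
    field_simp
    linear_combination hrr

lemma ang_continuousAt {q u v : ℂ} (h : q ∉ segment ℝ u v) :
    ContinuousAt (fun q => ang q u v) q := by
  unfold ang
  have huq : u - q ≠ 0 := by
    intro h0
    apply h
    rw [← sub_eq_zero.1 h0]
    exact left_mem_segment _ _ _
  refine ContinuousAt.comp (f := fun q => (v - q) / (u - q)) (Complex.continuousAt_arg (slit_of_not_mem h)) ?_
  fun_prop (disch := assumption)

lemma chainAng_continuousAt (q : ℂ) : ∀ (l : List ℂ) (u w : ℂ), q ∉ trc u l w →
    ContinuousAt (fun q => chainAng q u l w) q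
  | [], u, w, h => ang_continuousAt h
  | v :: l, u, w, h => by
    simp only [trc, mem_union, not_or] at h
    exact (ang_continuousAt h.1).add (chainAng_continuousAt q l v w h.2)

lemma isClosed_trc : ∀ (l : List ℂ) (u w : ℂ), IsClosed (trc u l w)
  | [], u, w => by
    unfold trc
    rw [segment_eq_image]
    exact (isCompact_Icc.image (by fun_prop)).isClosed
  | v :: l, u, w => by
    refine IsClosed.union ?_ (isClosed_trc l v w)
    rw [segment_eq_image]
    exact (isCompact_Icc.image (by fun_prop)).isClosed

lemma ends_mem_trc : ∀ (l : List ℂ) (u w : ℂ), u ∈ trc u l w ∧ w ∈ trc u l w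
  | [], _, _ => ⟨left_mem_segment _ _ _, right_mem_segment _ _ _⟩
  | v :: l, _, w => ⟨Or.inl (left_mem_segment _ _ _), Or.inr (ends_mem_trc l v w).2⟩

lemma chainAng_exp (q : ℂ) : ∀ (l : List ℂ) (u w : ℂ), q ∉ trc u l w →
    ∃ c : ℝ, (w - q) / (u - q) = c * Complex.exp (chainAng q u l w * Complex.I) ∧ 0 < c 
  | [], u, w, h => by
    refine ⟨‖(w - q) / (u - q)‖, ?_, norm_pos_iff.2 (Complex.slitPlane_ne_zero (slit_of_not_mem h))⟩
    exact (Complex.norm_mul_exp_arg_mul_I _).symm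
  | v :: l, u, w, h => by
    simp only [trc, mem_union, not_or] at h
    obtain ⟨c, hc, hc0⟩ := chainAng_exp q l v w h.2
    have h3 := Complex.slitPlane_ne_zero (slit_of_not_mem h.1)
    refine ⟨‖(v - q) / (u - q)‖ * c, ?_, mul_pos (norm_pos_iff.2 h3) hc0⟩
    have h1 := (Complex.norm_mul_exp_arg_mul_I ((v - q) / (u - q)))
    have h2 : (w - q) / (u - q) = ((v - q) / (u - q)) * ((w - q) / (v - q)) := by
      have : v - q ≠ 0 := by
        intro h0; simp [h0] at h3
      field_simp
    rw [h2, hc, ← h1]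
    simp only [chainAng, ang]
    push_cast
    rw [add_mul, Complex.exp_add]
    simp
    ring

lemma ang_tendsto (u v : ℂ) : Tendsto (fun q => ang q u v) (Bornology.cobounded ℂ) (𝓝 0) := by
  unfold ang
  have h1 : Tendsto (fun q : ℂ => (v - q) / (u - q)) (Bornology.cobounded ℂ) (𝓝 1) := by
    have : Tendsto (fun q : ℂ => 1 + (v - u) * (u - q)⁻¹) (Bornology.cobounded ℂ)
        (𝓝 (1 + (v - u) * 0)) := by
      refine tendsto_const_nhds.add (tendsto_const_nhds.mul ?_)
      refine tendsto_inv₀_cobounded.comp ?_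
      rw [← tendsto_norm_atTop_iff_cobounded]
      refine tendsto_atTop_mono (fun q => ?_)
        (tendsto_atTop_add_const_right _ (-‖u‖) (tendsto_norm_cobounded_atTop (E := ℂ)))
      have := norm_sub_norm_le q u
      rw [norm_sub_rev] at this
      linarith
    simp only [mul_zero, add_zero] at this
    refine this.congr' ?_
    filter_upwards [(Metric.hasBasis_cobounded_compl_closedBall (0:ℂ)).mem_of_mem (i := ‖u‖) trivial] with q hq
    have : u - q ≠ 0 := by
      intro h0
      rw [sub_eq_zero] at h0
      apply hq
      simp [h0]
    field_simp
    ring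
  have := (Complex.continuousAt_arg (x := 1) (by simp)).tendsto.comp h1
  simpa [Function.comp_def] using this

lemma chainAng_tendsto : ∀ (l : List ℂ) (u w : ℂ),
    Tendsto (fun q => chainAng q u l w) (Bornology.cobounded ℂ) (𝓝 0)
  | [], u, w => ang_tendsto u w
  | v :: l, u, w => by
    simpa [chainAng] using (ang_tendsto u v).add (chainAng_tendsto l v w)

lemma chainAng_small {q u : ℂ} {l : List ℂ} (h : q ∉ trc u l u) 
    (hs : |chainAng q u l u| < 2 * Real.pi) : chainAng q u l u = 0 := by
  obtain ⟨c, hc, hc0⟩ := chainAng_exp q l u u h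
  have hu : u - q ≠ 0 := by
    intro h0
    rw [sub_eq_zero] at h0
    exact h (h0 ▸ (ends_mem_trc l u u).1)
  rw [div_self hu] at hc
  have hn := congrArg norm hc
  rw [norm_mul, Complex.norm_exp_ofReal_mul_I] at hn
  simp [abs_of_pos hc0] at hn
  rw [← hn] at hc
  simp at hc
  obtain ⟨n, hn⟩ := Complex.exp_eq_one_iff.1 hc.symm
  have h2 : chainAng q u l u = n * (2 * Real.pi) := by
    have : (chainAng q u l u : ℂ) = n * (2 * Real.pi) := by
      apply mul_right_cancel₀ Complex.I_ne_zero
      rw [hn]; ring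
    exact_mod_cast this
  rw [h2, abs_mul, abs_of_pos Real.two_pi_pos] at hs
  have h3 : |(n : ℝ)| < 1 := by
    by_contra hcon
    nlinarith [Real.two_pi_pos]
  have h4 : n = 0 := by
    have : |n| < 1 := by exact_mod_cast h3
    exact Int.abs_lt_one_iff.1 this
  simp [h2, h4]

/-- The set of points around which the polygon winds. -/
def windSet (u : ℂ) (l : List ℂ) : Set ℂ := {q | q ∉ trc u l u ∧ chainAng q u l u ≠ 0}

lemma windSet_open (u : ℂ) (l : List ℂ) : IsOpen (windSet u l) := by
  rw [isOpen_iff_mem_nhds]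
  rintro q ⟨hq, hq'⟩
  filter_upwards [(isClosed_trc l u u).isOpen_compl.mem_nhds hq,
    (chainAng_continuousAt q l u u hq).eventually_ne hq'] with w h1 h2
  exact ⟨h1, h2⟩

lemma windSet_closure (u : ℂ) (l : List ℂ) : closure (windSet u l) ⊆ windSet u l ∪ trc u l u := by
  intro r hr
  by_contra hn
  simp only [windSet, mem_union, mem_ofPred_eq, not_or, not_and, not_not] at hn
  have h0 := hn.1 hn.2
  have h1 : ∀ᶠ w in 𝓝 r, |chainAng w u l u| < 2 * Real.pi := by
    have := (chainAng_continuousAt r l u u hn.2).abs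
    refine this.eventually_lt_const (by simp [h0, Real.pi_pos])
  obtain ⟨w, hw1, hw2⟩ := mem_closure_iff_nhds.1 hr _ h1
  exact hw2.2 (chainAng_small hw2.1 hw1)

lemma windSet_bounded (u : ℂ) (l : List ℂ) : Bornology.IsBounded (windSet u l) := by
  have h1 : ∀ᶠ w in Bornology.cobounded ℂ, |chainAng w u l u| < 2 * Real.pi := by
    have := (chainAng_tendsto l u u).abs
    exact this.eventually_lt_const (by simp [Real.pi_pos])
  rw [Bornology.isBounded_def]
  filter_upwards [h1] with w hw hw2
  exact hw2.2 (chainAng_small hw2.1 hw)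

lemma wind_zero_of_full {G : Set ℂ} (hG : FullSet G) {u : ℂ} {l : List ℂ} (h : trc u l u ⊆ G)
    {q : ℂ} (hq : q ∉ G) : chainAng q u l u = 0 := by
  by_contra hne
  exact hq (hG (windSet u l) (windSet_open u l) (windSet_bounded u l)
    ((windSet_closure u l).trans (union_subset_union_right _ h)) ⟨fun h' => hq (h h'), hne⟩)

lemma windSet_preconn {u : ℂ} {l : List ℂ} {C : Set ℂ} (hC : IsPreconnected C)
    (hd : Disjoint C (trc u l u)) {p : ℂ} (hp : p ∈ C) (hp' : p ∉ windSet u l) :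
    ∀ q ∈ C, chainAng q u l u = 0 := by
  intro q hq
  by_contra hne
  refine hp' (preconn_inside (windSet_open u l) hC ?_ ⟨q, hq, Set.disjoint_left.1 hd hq, hne⟩ hp)
  rintro w ⟨hw, hw'⟩
  rcases windSet_closure u l hw' with h | h
  · exact h
  · exact absurd h (Set.disjoint_left.1 hd hw)

lemma windSet_unbdd {u : ℂ} {l : List ℂ} {C : Set ℂ} (hC : IsPreconnected C)
    (hd : Disjoint C (trc u l u)) (hb : ¬ Bornology.IsBounded C) :
    ∀ q ∈ C, chainAng q u l u = 0 := by
  by_contra hcon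
  push Not at hcon
  obtain ⟨q, hq, hne⟩ := hcon
  apply hb
  refine (windSet_bounded u l).subset ?_
  intro p hp
  by_contra hp'
  exact hne (windSet_preconn hC hd hp hp' q hq)

lemma jump_im (c t : ℝ) (m s : ℂ) :
    ((m - c - (m + t * s)) / (m + c - (m + t * s))).im =
      (-2 * t * (c * s.im)) / Complex.normSq (m + c - (m + t * s)) := by
  rw [Complex.div_im, ← sub_div]
  congr 1
  simp
  ring

lemma jump_tendsto (c : ℝ) (hc : c ≠ 0) (m s : ℂ) :
    Tendsto (fun t : ℝ => (m - c - (m + t * s)) / (m + c - (m + t * s))) (𝓝[>] 0) (𝓝 (-1)) := by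
  have hc' : (m + c - (m + ((0 : ℝ) : ℂ) * s)) ≠ 0 := by
    simpa using hc
  have : ContinuousAt (fun t : ℝ => (m - c - (m + t * s)) / (m + c - (m + t * s))) 0 := by
    fun_prop (disch := assumption)
  have h := this.tendsto.mono_left (nhdsWithin_le_nhds (s := Set.Ioi 0))
  convert h using 2
  have : (c : ℂ) ≠ 0 := by exact_mod_cast hc
  simp
  rw [neg_div, div_self this]

lemma jump_normSq (c : ℝ) (m s : ℂ) (hs : c * s.im ≠ 0) (t : ℝ) (ht : 0 < t) :
    0 < Complex.normSq (m + c - (m + t * s)) := by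
  rw [Complex.normSq_pos]
  intro h0
  have := congrArg Complex.im h0
  simp at this
  rcases this with h | h
  · exact ht.ne' h
  · simp [h] at hs

lemma jump_pos (c : ℝ) (hc : c ≠ 0) (m s : ℂ) (hs : c * s.im < 0) :
    Tendsto (fun t : ℝ => ang (m + t * s) (m + c) (m - c)) (𝓝[>] 0) (𝓝 Real.pi) := by
  have h1 : Tendsto (fun t : ℝ => (m - c - (m + t * s)) / (m + c - (m + t * s))) (𝓝[>] 0)
      (𝓝[{z : ℂ | 0 ≤ z.im}] (-1)) := by
    refine tendsto_nhdsWithin_iff.2 ⟨jump_tendsto c hc m s, ?_⟩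
    filter_upwards [self_mem_nhdsWithin] with t ht
    have ht : 0 < t := ht
    change 0 ≤ Complex.im _
    rw [jump_im]
    refine div_nonneg ?_ (Complex.normSq_nonneg _)
    nlinarith
  exact (Complex.tendsto_arg_nhdsWithin_im_nonneg_of_re_neg_of_im_zero (z := -1) (by simp)
    (by simp)).comp h1

lemma jump_neg (c : ℝ) (hc : c ≠ 0) (m s : ℂ) (hs : 0 < c * s.im) :
    Tendsto (fun t : ℝ => ang (m + t * s) (m + c) (m - c)) (𝓝[>] 0) (𝓝 (-Real.pi)) := by
  have h1 : Tendsto (fun t : ℝ => (m - c - (m + t * s)) / (m + c - (m + t * s))) (𝓝[>] 0)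
      (𝓝[{z : ℂ | z.im < 0}] (-1)) := by
    refine tendsto_nhdsWithin_iff.2 ⟨jump_tendsto c hc m s, ?_⟩
    filter_upwards [self_mem_nhdsWithin] with t ht
    have ht : 0 < t := ht
    change Complex.im _ < 0
    rw [jump_im]
    refine div_neg_of_neg_of_pos ?_ (jump_normSq c m s hs.ne' t ht)
    nlinarith
  exact (Complex.tendsto_arg_nhdsWithin_im_neg_of_re_neg_of_im_zero (z := -1) (by simp)
    (by simp)).comp h1

lemma below_mem {G : Set ℂ} (hG : FullSet G) (m p : ℂ) (c : ℝ) (hc : c ≠ 0) (l : List ℂ)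
    (hseg : segment ℝ (m + c) (m - c) ⊆ G) (hT : trc (m - c) l (m + c) ⊆ G)
    (htop : ∀ z ∈ trc (m - c) l (m + c), z.im ≤ m.im)
    (hm : m ∉ trc (m - c) l (m + c)) (hp : p.im < m.im)
    (hray : ∀ t : ℝ, 0 < t → t < 1 → m + t * (p - m) ∉ trc (m - c) l (m + c)) : p ∈ G := by
  by_contra hpG
  have hsegim : ∀ z ∈ segment ℝ (m + c) (m - c), z.im = m.im := by
    rintro z ⟨a, b, _, _, hab, rfl⟩
    simp
    rw [← add_mul, hab, one_mul]
  have hsub : trc (m + c) ((m - c) :: l) (m + c) ⊆ G := union_subset hseg hT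
  have hWp := wind_zero_of_full hG hsub hpG
  set C : Set ℂ := (fun t : ℝ => m + t * (p - m)) '' Set.Ioc 0 1 with hC
  have hCpre : IsPreconnected C := isPreconnected_Ioc.image _ (by fun_prop)
  have hCd : Disjoint C (trc (m + c) ((m - c) :: l) (m + c)) := by
    rw [Set.disjoint_left]
    rintro _ ⟨t, ⟨ht0, ht1⟩, rfl⟩ hmem
    rcases hmem with h | h
    · have := hsegim _ h
      simp at this
      rcases this with h | h
      · exact ht0.ne' h
      · linarith
    · rcases ht1.lt_or_eq with h1 | h1
      · exact hray t ht0 h1 h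
      · subst h1
        simp at h
        exact hpG (hT h)
  have hpC : p ∈ C := ⟨1, by simp, by simp⟩
  have hW1 := windSet_preconn hCpre hCd hpC (fun h => h.2 hWp)
  have hUconv : Convex ℝ {z : ℂ | m.im < z.im} := convex_halfSpace_im_gt _
  have hUd : Disjoint {z : ℂ | m.im < z.im} (trc (m + c) ((m - c) :: l) (m + c)) := by
    rw [Set.disjoint_left]
    rintro z hz hmem
    have hz : m.im < z.im := hz
    rcases hmem with h | h
    · linarith [hsegim z h]
    · linarith [htop z h]
  have hUb : ¬ Bornology.IsBounded {z : ℂ | m.im < z.im} := by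
    intro hb
    obtain ⟨R, hR⟩ := hb.exists_norm_le
    have h1 := hR (((|m.im| + |R| + 1 : ℝ) : ℂ) * Complex.I) (by
      change m.im < Complex.im _
      simp
      linarith [le_abs_self m.im, abs_nonneg R])
    have h2 := (Complex.abs_im_le_norm _).trans h1
    simp at h2
    rw [abs_of_nonneg (by positivity)] at h2
    linarith [le_abs_self R, abs_nonneg m.im]
  have hW2 := windSet_unbdd hUconv.isPreconnected hUd hUb
  have hf := chainAng_continuousAt m l (m - c) (m + c) hm
  set f := fun q => chainAng q (m - c) l (m + c) with hfdef
  have hlim : ∀ s : ℂ, Tendsto (fun t : ℝ => f (m + t * s)) (𝓝[>] 0) (𝓝 (f m)) := by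
    intro s
    have : Tendsto (fun t : ℝ => m + t * s) (𝓝[>] 0) (𝓝 m) := by
      have h : ContinuousAt (fun t : ℝ => m + t * s) 0 := by fun_prop
      have := h.tendsto.mono_left (nhdsWithin_le_nhds (s := Set.Ioi 0))
      simpa using this
    exact hf.tendsto.comp this
  have key : ∀ s : ℂ, (∀ᶠ t : ℝ in 𝓝[>] 0, chainAng (m + t * s) (m + c) ((m - c) :: l) (m + c) = 0) →
      Tendsto (fun t : ℝ => ang (m + t * s) (m + c) (m - c)) (𝓝[>] 0) (𝓝 (- f m)) := by
    intro s hs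
    refine (hlim s).neg.congr' ?_
    filter_upwards [hs] with t ht
    simp only [chainAng] at ht
    simp only [hfdef]
    linarith
  have k1 := key (p - m) (by
    filter_upwards [Ioc_mem_nhdsGT (zero_lt_one' ℝ)] with t ht
    exact hW1 _ ⟨t, ht, rfl⟩)
  have k2 := key (-(p - m)) (by
    filter_upwards [self_mem_nhdsWithin] with t ht
    have ht : 0 < t := ht
    apply hW2
    change m.im < Complex.im _
    simp
    nlinarith)
  rcases lt_or_gt_of_ne hc with h | h
  · have j1 := jump_neg c hc m (p - m) (by simp; nlinarith)
    have j2 := jump_pos c hc m (-(p - m)) (by simp; nlinarith)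
    have e1 := tendsto_nhds_unique k1 j1
    have e2 := tendsto_nhds_unique k2 j2
    linarith [Real.pi_pos]
  · have j1 := jump_pos c hc m (p - m) (by simp; nlinarith)
    have j2 := jump_neg c hc m (-(p - m)) (by simp; nlinarith)
    have e1 := tendsto_nhds_unique k1 j1
    have e2 := tendsto_nhds_unique k2 j2
    linarith [Real.pi_pos]

/-! ### Lattice walks -/

/-- Lattice point of mesh `δ`. -/
noncomputable def pt (δ : ℝ) (v : ℤ × ℤ) : ℂ := ⟨δ * v.1, δ * v.2⟩

/-- Equal or neighbouring lattice points. -/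
def LatAdj (u v : ℤ × ℤ) : Prop := |u.1 - v.1| + |u.2 - v.2| ≤ 1

lemma LatAdj.cases {u v : ℤ × ℤ} (h : LatAdj u v) :
    (u.1 = v.1 ∧ |u.2 - v.2| ≤ 1) ∨ (u.2 = v.2 ∧ (u.1 = v.1 + 1 ∨ v.1 = u.1 + 1)) := by
  unfold LatAdj at h
  grind

/-- Consequences of lying on a lattice edge other than the edge from `(x-1,h)` to `(x,h)`. -/
lemma edge_facts {δ : ℝ} (hδ : 0 < δ) {u w : ℤ × ℤ} (huw : LatAdj u w) {z : ℂ}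
    (hz : z ∈ segment ℝ (pt δ u) (pt δ w)) {x h : ℤ} (hu : u.2 ≤ h) (hw : w.2 ≤ h)
    (hne : ¬ (u.2 = h ∧ w.2 = h ∧ (u.1 = x ∨ w.1 = x) ∧ (u.1 < x ∨ w.1 < x))) :
    z.im ≤ δ * h ∧ ¬ (δ * (x - 1) < z.re ∧ z.re < δ * x ∧ δ * (h - 1) < z.im) := by
  obtain ⟨a, b, ha, hb, hab, rfl⟩ := hz
  have hu' : (u.2 : ℝ) ≤ h := by exact_mod_cast hu
  have hw' : (w.2 : ℝ) ≤ h := by exact_mod_cast hw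
  simp only [pt, Complex.add_re, Complex.add_im, Complex.smul_re, Complex.smul_im, smul_eq_mul]
  have hb' : b = 1 - a := by linarith
  subst hb'
  refine ⟨?_, ?_⟩
  · have h1 : a * (δ * u.2) ≤ a * (δ * h) := by gcongr
    have h2 : (1 - a) * (δ * w.2) ≤ (1 - a) * (δ * h) := by gcongr
    nlinarith
  · rintro ⟨h1, h2, h3⟩
    have e1 : a * (δ * u.1) + (1 - a) * (δ * w.1) = δ * (a * u.1 + (1 - a) * w.1) := by ring
    have e2 : a * (δ * u.2) + (1 - a) * (δ * w.2) = δ * (a * u.2 + (1 - a) * w.2) := by ring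
    rw [e1] at h1 h2
    rw [e2] at h3
    have h1 := lt_of_mul_lt_mul_left h1 hδ.le
    have h2 := lt_of_mul_lt_mul_left h2 hδ.le
    have h3 := lt_of_mul_lt_mul_left h3 hδ.le
    rcases huw.cases with ⟨h4, _⟩ | ⟨h4, h5⟩
    · rw [h4] at h1 h2
      have h1' : ((x - 1 : ℤ) : ℝ) < w.1 := by push_cast; linarith
      have h2' : (w.1 : ℝ) < x := by linarith
      have h1' : x - 1 < w.1 := by exact_mod_cast h1'
      have h2' : w.1 < x := by exact_mod_cast h2'
      omega
    · rw [h4] at h3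
      have h3' : ((h - 1 : ℤ) : ℝ) < w.2 := by push_cast; linarith
      have h3' : h - 1 < w.2 := by exact_mod_cast h3'
      have h6 : w.2 = h := by omega
      rcases h5 with h5 | h5
      · have h5' : (u.1 : ℝ) = w.1 + 1 := by exact_mod_cast h5
        rw [h5'] at h1 h2
        have i1 : ((x - 1 : ℤ) : ℝ) < w.1 + 1 := by push_cast; nlinarith
        have i2 : (w.1 : ℝ) < x := by nlinarith
        have i1 : x - 1 < w.1 + 1 := by exact_mod_cast i1
        have i2 : w.1 < x := by exact_mod_cast i2
        apply hne
        omega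
      · have h5' : (w.1 : ℝ) = u.1 + 1 := by exact_mod_cast h5
        rw [h5'] at h1 h2
        have i1 : ((x - 1 : ℤ) : ℝ) < u.1 + 1 := by push_cast; nlinarith
        have i2 : (u.1 : ℝ) < x := by nlinarith
        have i1 : x - 1 < u.1 + 1 := by exact_mod_cast i1
        have i2 : u.1 < x := by exact_mod_cast i2
        apply hne
        omega

/-- Lattice points lying in `G`. -/
abbrev LatIn (G : Set ℂ) (δ : ℝ) := {v : ℤ × ℤ // pt δ v ∈ G}

/-- Lattice edges lying in `G`. -/
def AdjIn (G : Set ℂ) (δ : ℝ) (u v : LatIn G δ) : Prop :=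
  LatAdj u.1 v.1 ∧ segment ℝ (pt δ u.1) (pt δ v.1) ⊆ G

/-- Lattice walks in `G`. -/
def Wlk (G : Set ℂ) (δ : ℝ) : LatIn G δ → List (LatIn G δ) → LatIn G δ → Prop
  | u, [], w => AdjIn G δ u w
  | u, v :: l, w => AdjIn G δ u v ∧ Wlk G δ v l w

lemma wlk_append {G : Set ℂ} {δ : ℝ} {v w : LatIn G δ} {l' : List (LatIn G δ)} :
    ∀ {l : List (LatIn G δ)} {u : LatIn G δ},
      Wlk G δ u (l ++ v :: l') w ↔ Wlk G δ u l v ∧ Wlk G δ v l' w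
  | [], u => Iff.rfl
  | x :: l, u => by
    simp only [List.cons_append, Wlk, wlk_append (l := l), and_assoc]

lemma trc_append {v w : ℂ} {l' : List ℂ} : ∀ {l : List ℂ} {u : ℂ},
    trc u (l ++ v :: l') w = trc u l v ∪ trc v l' w
  | [], u => rfl
  | x :: l, u => by
    simp only [List.cons_append, trc, trc_append (l := l), union_assoc]

/-- The map to the plane. -/
noncomputable def ptL {G : Set ℂ} {δ : ℝ} (v : LatIn G δ) : ℂ := pt δ v.1

lemma mem_trc {G : Set ℂ} {δ : ℝ} {z : ℂ} {w : LatIn G δ} : ∀ {l : List (LatIn G δ)} {u : LatIn G δ},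
    Wlk G δ u l w → z ∈ trc (ptL u) (l.map ptL) (ptL w) →
    ∃ a ∈ u :: (l ++ [w]), ∃ b ∈ u :: (l ++ [w]), AdjIn G δ a b ∧ z ∈ segment ℝ (pt δ a.1) (pt δ b.1)
  | [], u, h, hz => ⟨u, by simp, w, by simp, h, hz⟩
  | v :: l, u, h, hz => by
    rcases hz with hz | hz
    · exact ⟨u, by simp, v, by simp, h.1, hz⟩
    · obtain ⟨a, ha, b, hb, hab⟩ := mem_trc h.2 hz
      exact ⟨a, List.mem_cons_of_mem _ ha, b, List.mem_cons_of_mem _ hb, hab⟩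

lemma trc_sub {G : Set ℂ} {δ : ℝ} {u w : LatIn G δ} {l : List (LatIn G δ)}
    (h : Wlk G δ u l w) : trc (ptL u) (l.map ptL) (ptL w) ⊆ G := by
  intro z hz
  obtain ⟨a, _, b, _, hab, hz⟩ := mem_trc h hz
  exact hab.2 hz

/-- The closed lattice square with upper right corner `(x,h)`. -/
def sqr (δ : ℝ) (x h : ℤ) : Set ℂ :=
  {z | (δ * (x - 1) ≤ z.re ∧ z.re ≤ δ * x) ∧ (δ * (h - 1) ≤ z.im ∧ z.im ≤ δ * h)}

lemma sqr_convex (δ : ℝ) (x h : ℤ) : Convex ℝ (sqr δ x h) := by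
  have h1 := (((convex_halfSpace_re_ge (δ * (x - 1))).inter (convex_halfSpace_re_le (δ * x))).inter
    ((convex_halfSpace_im_ge (δ * (h - 1))).inter (convex_halfSpace_im_le (δ * h))))
  exact h1

lemma square_mem {G : Set ℂ} (hG : FullSet G) {δ : ℝ} (hδ : 0 < δ) (v a b : LatIn G δ)
    (m : List (LatIn G δ)) (hva : AdjIn G δ v a) (hab : Wlk G δ a m b) (hbv : AdjIn G δ b v)
    (hmax : ∀ y ∈ a :: (m ++ [b]), y.1.2 ≤ v.1.2) (hv : v ∉ a :: (m ++ [b]))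
    (hc : (a.1 = (v.1.1 - 1, v.1.2) ∧ b.1 = (v.1.1, v.1.2 - 1)) ∨
      (b.1 = (v.1.1 - 1, v.1.2) ∧ a.1 = (v.1.1, v.1.2 - 1))) :
    sqr δ v.1.1 v.1.2 ⊆ G := by
  obtain ⟨⟨x, h⟩, hvG⟩ := v
  simp only at hmax hc ⊢
  set v : LatIn G δ := ⟨(x, h), hvG⟩ with hvdef
  -- facts on all other edges
  have F1 : ∀ z ∈ trc (ptL a) (m.map ptL) (ptL b),
      z.im ≤ δ * h ∧ ¬ (δ * (x - 1) < z.re ∧ z.re < δ * x ∧ δ * (h - 1) < z.im) := by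
    intro z hz
    obtain ⟨c, hc, d, hd, hcd, hz⟩ := mem_trc hab hz
    refine edge_facts hδ hcd.1 hz (hmax c hc) (hmax d hd) ?_
    rintro ⟨h1, h2, h3 | h3, -⟩
    · exact hv (by rwa [show v = c from Subtype.ext (Prod.ext h3.symm h1.symm)])
    · exact hv (by rwa [show v = d from Subtype.ext (Prod.ext h3.symm h2.symm)])
  have F2 : ∀ d : LatIn G δ, d.1 = (x, h - 1) → LatAdj v.1 d.1 → ∀ z ∈ segment ℝ (ptL v) (ptL d),
      z.im ≤ δ * h ∧ ¬ (δ * (x - 1) < z.re ∧ z.re < δ * x ∧ δ * (h - 1) < z.im) := by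
    intro d hd hadj z hz
    refine edge_facts hδ hadj hz le_rfl (by rw [hd]; simp) ?_
    rw [hd]
    simp
  set M : ℂ := ⟨δ * (x - 1 / 2), δ * h⟩ with hM
  have hMbad : ¬ (M.im ≤ δ * h ∧ ¬ (δ * (x - 1) < M.re ∧ M.re < δ * x ∧ δ * (h - 1) < M.im)) := by
    simp only [hM]
    rintro ⟨-, h2⟩
    apply h2
    refine ⟨?_, ?_, ?_⟩ <;> nlinarith
  have main : ∀ (c : ℝ) (l : List ℂ), c ≠ 0 → 
      segment ℝ (M + c) (M - c) ⊆ G → trc (M - c) l (M + c) ⊆ G →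
      (∀ z ∈ trc (M - c) l (M + c), 
        z.im ≤ δ * h ∧ ¬ (δ * (x - 1) < z.re ∧ z.re < δ * x ∧ δ * (h - 1) < z.im)) →
      (∀ z : ℂ, z.im = δ * h → δ * (x - 1) ≤ z.re → z.re ≤ δ * x → z ∈ G) → 
      sqr δ x h ⊆ G := by
    intro c l hc hs hT hF htopG p hp
    obtain ⟨⟨p1, p2⟩, p3, p4⟩ := hp
    rcases p4.lt_or_eq with p4 | p4
    · refine below_mem hG M p c hc l hs hT (fun z hz => (hF z hz).1) (fun hz => hMbad (hF M hz)) p4 ?_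
      intro t ht0 ht1 hz
      apply (hF _ hz).2
      simp only [hM, Complex.add_re, Complex.add_im, Complex.mul_re, Complex.mul_im,
        Complex.ofReal_re, Complex.ofReal_im, Complex.sub_re, Complex.sub_im, zero_mul, sub_zero,
        add_zero]
      refine ⟨?_, ?_, ?_⟩
      · nlinarith
      · nlinarith
      · nlinarith
    · exact htopG p p4 p1 p2
  have segtop : ∀ y : LatIn G δ, y.1 = (x - 1, h) → segment ℝ (pt δ v.1) (pt δ y.1) ⊆ G →
      (∀ z : ℂ, z.im = δ * h → δ * (x - 1) ≤ z.re → z.re ≤ δ * x → z ∈ G) := by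
    intro y hy hs z hz1 hz2 hz3
    apply hs
    refine ⟨z.re / δ - (x - 1), x - z.re / δ, ?_, ?_, by ring, ?_⟩
    · rw [sub_nonneg, le_div_iff₀ hδ]; linarith
    · rw [sub_nonneg, div_le_iff₀ hδ]; linarith
    · rw [hy]
      apply Complex.ext
      · simp [pt, hvdef]
        field_simp
        ring
      · simp [pt, hvdef, hz1]
        ring
  have e1 : ∀ y : LatIn G δ, y.1 = (x - 1, h) → ptL y = M - ((δ / 2 : ℝ) : ℂ) := by
    intro y hy
    simp only [ptL, hy]
    apply Complex.ext
    · simp [pt, hM]; ring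
    · simp [pt, hM]
  have e2 : ptL v = M + ((δ / 2 : ℝ) : ℂ) := by
    apply Complex.ext
    · simp [ptL, pt, hM, hvdef]; ring
    · simp [ptL, pt, hM, hvdef]
  rcases hc with ⟨ha, hb⟩ | ⟨hb, ha⟩
  · have htr : trc (ptL a) (m.map ptL ++ [ptL b]) (ptL v) =
        trc (ptL a) (m.map ptL) (ptL b) ∪ segment ℝ (ptL b) (ptL v) := trc_append
    have hlast : segment ℝ (ptL b) (ptL v) ⊆ G := hbv.2
    refine main (δ / 2) (m.map ptL ++ [ptL b]) (by positivity) ?_ ?_ ?_ (segtop a ha hva.2)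
    · rw [← e1 a ha, ← e2]; exact hva.2
    · rw [← e1 a ha, ← e2, htr]
      exact union_subset (trc_sub hab) hlast
    · rw [← e1 a ha, ← e2, htr]
      rintro z (hz | hz)
      · exact F1 z hz
      · refine F2 b hb ?_ z (by rwa [segment_symm])
        rw [hb]; simp [LatAdj, hvdef]
  · have e3 : M + ((-(δ / 2) : ℝ) : ℂ) = ptL b := by rw [e1 b hb]; push_cast; ring
    have e4 : M - ((-(δ / 2) : ℝ) : ℂ) = ptL v := by rw [e2]; push_cast; ring
    refine main (-(δ / 2)) (ptL a :: m.map ptL) (by simpa using hδ.ne') ?_ ?_ ?_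
      (segtop b hb (by rw [segment_symm]; exact hbv.2))
    · rw [e3, e4]; exact hbv.2
    · rw [e3, e4]
      exact union_subset hva.2 (trc_sub hab)
    · rw [e3, e4]
      rintro z (hz | hz)
      · exact F2 a ha hva.1 z hz
      · exact F1 z hz

/-! ### Homotopies -/

open CategoryTheory

lemma homotopic_of_convex {G K : Set ℂ} (hK : Convex ℝ K) (hKG : K ⊆ G) {x y : G} (p q : Path x y)
    (hp : ∀ t, (p t : ℂ) ∈ K) (hq : ∀ t, (q t : ℂ) ∈ K) : p.Homotopic q := by
  have hmem : ∀ z : unitInterval × unitInterval,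
      (1 - (z.1 : ℝ)) • (p z.2 : ℂ) + (z.1 : ℝ) • (q z.2 : ℂ) ∈ K := fun z =>
    hK (hp z.2) (hq z.2) (by linarith [z.1.2.2]) z.1.2.1 (by ring)
  refine ⟨⟨⟨⟨fun z => ⟨_, hKG (hmem z)⟩, ?_⟩, ?_, ?_⟩, ?_⟩⟩
  · refine Continuous.subtype_mk ?_ _
    fun_prop
  · intro t
    apply Subtype.ext
    simp
  · intro t
    apply Subtype.ext
    simp
  · intro t z hz
    apply Subtype.ext
    rcases hz with rfl | hz
    · simp [← add_mul]
    · obtain rfl : z = 1 := hz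
      simp [← add_mul]

/-- Straight path. -/
noncomputable def linePath {G : Set ℂ} (x y : G) (h : segment ℝ (x : ℂ) y ⊆ G) : Path x y where
  toFun t := ⟨(1 - (t : ℝ)) • (x : ℂ) + (t : ℝ) • (y : ℂ),
    h ⟨1 - t, t, by linarith [t.2.2], t.2.1, by ring, rfl⟩⟩
  continuous_toFun := by
    refine Continuous.subtype_mk ?_ _
    fun_prop
  source' := by apply Subtype.ext; simp
  target' := by apply Subtype.ext; simp

lemma linePath_mem {G K : Set ℂ} (hK : Convex ℝ K) {x y : G} (h : segment ℝ (x : ℂ) y ⊆ G)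
    (hx : (x : ℂ) ∈ K) (hy : (y : ℂ) ∈ K) (t) : (linePath x y h t : ℂ) ∈ K :=
  hK hx hy (by linarith [t.2.2]) t.2.1 (by ring)

/-- Homotopy class of the straight path (junk if it leaves `G`). -/
noncomputable def segHom {G : Set ℂ} [PathConnectedSpace G] (x y : G) :
    (⟨x⟩ : FundamentalGroupoid G) ⟶ ⟨y⟩ :=
  Path.Homotopic.Quotient.mk
    (if h : segment ℝ (x : ℂ) y ⊆ G then linePath x y h else PathConnectedSpace.somePath x y)

section
variable {G K : Set ℂ} [PathConnectedSpace G]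

lemma mk_eq_segHom (hK : Convex ℝ K) (hKG : K ⊆ G) {x y : G} (p : Path x y)
    (hp : ∀ t, (p t : ℂ) ∈ K) :
    (Path.Homotopic.Quotient.mk p : (⟨x⟩ : FundamentalGroupoid G) ⟶ ⟨y⟩) = segHom x y := by
  have hx : (x : ℂ) ∈ K := by simpa using hp 0
  have hy : (y : ℂ) ∈ K := by simpa using hp 1
  have h : segment ℝ (x : ℂ) y ⊆ G := (hK.segment_subset hx hy).trans hKG
  unfold segHom
  rw [dif_pos h]
  apply Path.Homotopic.Quotient.eq.2
  exact homotopic_of_convex hK hKG _ _ hp (linePath_mem hK h hx hy)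

lemma segHom_comp (hK : Convex ℝ K) (hKG : K ⊆ G) {x y z : G} (hx : (x : ℂ) ∈ K)
    (hy : (y : ℂ) ∈ K) (hz : (z : ℂ) ∈ K) : segHom x y ≫ segHom y z = segHom x z := by
  have h1 : segment ℝ (x : ℂ) y ⊆ G := (hK.segment_subset hx hy).trans hKG
  have h2 : segment ℝ (y : ℂ) z ⊆ G := (hK.segment_subset hy hz).trans hKG
  rw [← mk_eq_segHom hK hKG (linePath x y h1) (linePath_mem hK h1 hx hy),
    ← mk_eq_segHom hK hKG (linePath y z h2) (linePath_mem hK h2 hy hz),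
    ← mk_eq_segHom hK hKG ((linePath x y h1).trans (linePath y z h2))]
  · rfl
  · intro t
    rw [Path.trans_apply]
    split_ifs
    · exact linePath_mem hK h1 hx hy _
    · exact linePath_mem hK h2 hy hz _

lemma segHom_self (x : G) : segHom x x = 𝟙 _ := by
  rw [← mk_eq_segHom (convex_singleton (x : ℂ)) (by simp) (Path.refl x) (by simp)]
  rfl

lemma segHom_back {x y : G} (h : segment ℝ (x : ℂ) y ⊆ G) : segHom x y ≫ segHom y x = 𝟙 _ := by
  rw [segHom_comp (convex_segment _ _) h (left_mem_segment _ _ _) (right_mem_segment _ _ _)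
    (left_mem_segment _ _ _), segHom_self]

end

section
variable {G : Set ℂ} [PathConnectedSpace G] {δ : ℝ}

/-- Lattice point as an element of `G`. -/
noncomputable def inG (v : LatIn G δ) : G := ⟨pt δ v.1, v.2⟩

/-- Homotopy class of a lattice walk. -/
noncomputable def chainHom : (u : LatIn G δ) → List (LatIn G δ) → (w : LatIn G δ) →
    ((⟨inG u⟩ : FundamentalGroupoid G) ⟶ ⟨inG w⟩)
  | u, [], w => segHom (inG u) (inG w)
  | u, v :: l, w => segHom (inG u) (inG v) ≫ chainHom v l w

lemma chainHom_append {v w : LatIn G δ} {l' : List (LatIn G δ)} :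
    ∀ {l : List (LatIn G δ)} {u : LatIn G δ},
      chainHom u (l ++ v :: l') w = chainHom u l v ≫ chainHom v l' w
  | [], u => rfl
  | x :: l, u => by
    simp only [List.cons_append, chainHom, chainHom_append (l := l), Category.assoc]

lemma comp_comm_one {C : Type*} [Groupoid C] {X Y : C} {f : X ⟶ Y} {g : Y ⟶ X} (h : f ≫ g = 𝟙 X) :
    g ≫ f = 𝟙 Y := by
  have : g = Groupoid.inv f := by
    rw [← cancel_epi f, h]; simp
  rw [this]; simp

/-- Termination measure of a walk. -/
def msr (M : ℤ) (l : List (LatIn G δ)) : ℕ := (l.map (fun v => 1 + (v.1.2 - M).toNat)).sum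

lemma rotate_walk {u x : LatIn G δ} {l : List (LatIn G δ)} (h : Wlk G δ u l u) (hx : x ∈ u :: l) :
    ∃ l', Wlk G δ x l' x ∧ (x :: l').Perm (u :: l) ∧
      (chainHom x l' x = 𝟙 _ → chainHom u l u = 𝟙 _) := by
  rcases List.mem_cons.1 hx with rfl | hx
  · exact ⟨l, h, List.Perm.refl _, id⟩
  · obtain ⟨A, B, rfl⟩ := List.append_of_mem hx
    rw [wlk_append] at h
    refine ⟨B ++ u :: A, wlk_append.2 ⟨h.2, h.1⟩, ?_, ?_⟩
    · exact List.perm_append_comm (l₁ := x :: B) (l₂ := u :: A)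
    · rw [chainHom_append, chainHom_append]
      exact comp_comm_one

lemma exists_lexmax : ∀ (l : List (LatIn G δ)), l ≠ [] → ∃ v ∈ l, ∀ y ∈ l,
    y.1.2 < v.1.2 ∨ (y.1.2 = v.1.2 ∧ y.1.1 ≤ v.1.1) := by
  intro l hl
  induction l with
  | nil => exact absurd rfl hl
  | cons a l ih =>
    by_cases h : l = []
    · subst h
      exact ⟨a, by simp, by simp⟩
    · obtain ⟨v, hv, hmax⟩ := ih h
      by_cases hav : a.1.2 < v.1.2 ∨ (a.1.2 = v.1.2 ∧ a.1.1 ≤ v.1.1)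
      · refine ⟨v, List.mem_cons_of_mem _ hv, ?_⟩
        intro y hy
        rcases List.mem_cons.1 hy with rfl | hy
        · exact hav
        · exact hmax y hy
      · refine ⟨a, by simp, ?_⟩
        intro y hy
        rcases List.mem_cons.1 hy with rfl | hy
        · right; simp
        · have := hmax y hy
          omega

lemma neighbour_cases {v a : LatIn G δ} (h : LatAdj v.1 a.1) (hne : a ≠ v)
    (hm : a.1.2 < v.1.2 ∨ (a.1.2 = v.1.2 ∧ a.1.1 ≤ v.1.1)) :
    a.1 = (v.1.1 - 1, v.1.2) ∨ a.1 = (v.1.1, v.1.2 - 1) := by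
  have hne' : a.1 ≠ v.1 := fun h => hne (Subtype.ext h)
  obtain ⟨⟨x, y⟩, _⟩ := v
  obtain ⟨⟨x', y'⟩, _⟩ := a
  simp only [LatAdj, Prod.mk.injEq, ne_eq] at *
  grind

lemma walk_null (hG : FullSet G) (hδ : 0 < δ) (M : ℤ) : ∀ (n : ℕ) (u : LatIn G δ)
    (l : List (LatIn G δ)), msr M (u :: l) ≤ n → Wlk G δ u l u → (∀ y ∈ u :: l, M ≤ y.1.2) →
    chainHom u l u = 𝟙 _ := by
  intro n
  induction n with
  | zero =>
    intro u l h
    simp [msr] at h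
  | succ n ih =>
    intro u l hn hw hM
    by_cases hnd : (u :: l).Nodup
    · obtain ⟨v, hv, hmax⟩ := exists_lexmax (u :: l) (by simp)
      obtain ⟨l', hw', hperm, himp⟩ := rotate_walk hw hv
      apply himp
      have hnd' := hperm.nodup_iff.2 hnd
      have hn' : msr M (v :: l') ≤ n + 1 := by
        have : msr M (v :: l') = msr M (u :: l) := (hperm.map _).sum_eq
        omega
      replace hmax : ∀ y ∈ v :: l', y.1.2 < v.1.2 ∨ (y.1.2 = v.1.2 ∧ y.1.1 ≤ v.1.1) :=
        fun y hy => hmax y (hperm.mem_iff.1 hy)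
      replace hM : ∀ y ∈ v :: l', M ≤ y.1.2 := fun y hy => hM y (hperm.mem_iff.1 hy)
      clear himp hperm hw hnd hn hv
      rcases l' with _ | ⟨a, l'⟩
      · exact segHom_self _
      rcases List.eq_nil_or_concat l' with rfl | ⟨m, b, rfl⟩
      · exact segHom_back hw'.1.2
      rw [List.concat_eq_append] at *
      have hva : AdjIn G δ v a := hw'.1
      have hmb := hw'.2
      rw [wlk_append] at hmb
      obtain ⟨ham, hbv⟩ := hmb
      have hbv : AdjIn G δ b v := hbv
      have hvn : v ∉ a :: (m ++ [b]) := (List.nodup_cons.1 hnd').1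
      have han : a ∉ m ++ [b] := (List.nodup_cons.1 (List.nodup_cons.1 hnd').2).1
      have hneab : a ≠ b := fun h => han (by simp [h])
      have hca := neighbour_cases hva.1 (fun h => hvn (by simp [h])) (hmax a (by simp))
      have hcb := neighbour_cases (v := v) (a := b)
        (by have := hbv.1; unfold LatAdj at *; rwa [abs_sub_comm, abs_sub_comm v.1.2])
        (fun h => hvn (by simp [h])) (hmax b (by simp))
      have hc : (a.1 = (v.1.1 - 1, v.1.2) ∧ b.1 = (v.1.1, v.1.2 - 1)) ∨
          (b.1 = (v.1.1 - 1, v.1.2) ∧ a.1 = (v.1.1, v.1.2 - 1)) := by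
        rcases hca with h1 | h1 <;> rcases hcb with h2 | h2
        · exact absurd (Subtype.ext (h1.trans h2.symm)) hneab
        · exact Or.inl ⟨h1, h2⟩
        · exact Or.inr ⟨h2, h1⟩
        · exact absurd (Subtype.ext (h1.trans h2.symm)) hneab
      have hsq := square_mem hG hδ v a b m hva ham hbv
        (fun y hy => by have := hmax y (List.mem_cons_of_mem _ hy); omega) hvn hc
      have hconv := sqr_convex δ v.1.1 v.1.2
      have hcor : ∀ i j : ℤ, (i = v.1.1 ∨ i = v.1.1 - 1) → (j = v.1.2 ∨ j = v.1.2 - 1) →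
          pt δ (i, j) ∈ sqr δ v.1.1 v.1.2 := by
        intro i j hi hj
        rcases hi with rfl | rfl <;> rcases hj with rfl | rfl <;>
        · simp only [sqr, pt]
          push_cast
          refine ⟨⟨?_, ?_⟩, ?_, ?_⟩ <;> simp only [] <;> nlinarith
      let v' : LatIn G δ := ⟨(v.1.1 - 1, v.1.2 - 1), hsq (hcor _ _ (Or.inr rfl) (Or.inr rfl))⟩
      have kv' : ((inG v' : G) : ℂ) ∈ sqr δ v.1.1 v.1.2 := hcor _ _ (Or.inr rfl) (Or.inr rfl)
      have kv : ((inG v : G) : ℂ) ∈ sqr δ v.1.1 v.1.2 := hcor _ _ (Or.inl rfl) (Or.inl rfl)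
      have ka : ((inG a : G) : ℂ) ∈ sqr δ v.1.1 v.1.2 := by
        change pt δ a.1 ∈ _
        rcases hca with h | h <;> rw [h]
        · exact hcor _ _ (Or.inr rfl) (Or.inl rfl)
        · exact hcor _ _ (Or.inl rfl) (Or.inr rfl)
      have kb : ((inG b : G) : ℂ) ∈ sqr δ v.1.1 v.1.2 := by
        change pt δ b.1 ∈ _
        rcases hcb with h | h <;> rw [h]
        · exact hcor _ _ (Or.inr rfl) (Or.inl rfl)
        · exact hcor _ _ (Or.inl rfl) (Or.inr rfl)
      have hadj1 : AdjIn G δ v' a := by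
        refine ⟨?_, (hconv.segment_subset kv' ka).trans hsq⟩
        rcases hca with h | h <;> rw [h] <;> simp [LatAdj, v']
      have hadj2 : AdjIn G δ b v' := by
        refine ⟨?_, (hconv.segment_subset kb kv').trans hsq⟩
        rcases hcb with h | h <;> rw [h] <;> simp [LatAdj, v']
      have hMv : M ≤ v.1.2 - 1 := by
        rcases hc with ⟨h1, h2⟩ | ⟨h1, h2⟩
        · have := hM b (by simp); rwa [h2] at this
        · have := hM a (by simp); rwa [h2] at this
      have hnew := ih v' (a :: (m ++ [b])) (by
          simp only [msr, List.map_cons, List.sum_cons] at hn' ⊢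
          have : (v'.1.2 - M).toNat + 1 = (v.1.2 - M).toNat := by
            change (v.1.2 - 1 - M).toNat + 1 = _
            omega
          omega)
        ⟨hadj1, wlk_append.2 ⟨ham, hadj2⟩⟩ (by
          intro y hy
          rcases List.mem_cons.1 hy with rfl | hy
          · exact hMv
          · exact hM y (List.mem_cons_of_mem _ hy))
      simp only [chainHom, chainHom_append] at hnew ⊢
      have E1 : segHom (inG v) (inG a) = segHom (inG v) (inG v') ≫ segHom (inG v') (inG a) :=
        (segHom_comp hconv hsq kv kv' ka).symm
      have E2 : segHom (inG b) (inG v) = segHom (inG b) (inG v') ≫ segHom (inG v') (inG v) :=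
        (segHom_comp hconv hsq kb kv' kv).symm
      rw [E1, E2]
      have : (segHom (inG v) (inG v') ≫ segHom (inG v') (inG a)) ≫ chainHom a m b ≫
          segHom (inG b) (inG v') ≫ segHom (inG v') (inG v) =
          segHom (inG v) (inG v') ≫ (segHom (inG v') (inG a) ≫ chainHom a m b ≫
          segHom (inG b) (inG v')) ≫ segHom (inG v') (inG v) := by
        simp only [Category.assoc]
      rw [this, hnew, Category.id_comp, segHom_comp hconv hsq kv kv' kv, segHom_self]
    · rw [List.nodup_cons, not_and_or, not_not] at hnd
      rcases hnd with hu | hl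
      · obtain ⟨A, B, rfl⟩ := List.append_of_mem hu
        rw [wlk_append] at hw
        simp only [msr, List.map_cons, List.sum_cons, List.map_append, List.sum_append] at hn
        rw [chainHom_append, ih u A _ hw.1 (fun y hy => hM y (by simp at hy ⊢; tauto)),
          ih u B _ hw.2 (fun y hy => hM y (by simp at hy ⊢; tauto)), Category.comp_id]
        · simp only [msr, List.map_cons, List.sum_cons]; omega
        · simp only [msr, List.map_cons, List.sum_cons]; omega
      · obtain ⟨x, hx⟩ := List.exists_duplicate_iff_not_nodup.2 hl
        obtain ⟨A, B, D, rfl⟩ : ∃ A B D, l = A ++ x :: (B ++ x :: D) := by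
          clear hn hw hM hl
          induction hx with
          | cons_mem h =>
            obtain ⟨B, D, rfl⟩ := List.append_of_mem h
            exact ⟨[], B, D, rfl⟩
          | cons_duplicate h ih =>
            obtain ⟨A, B, D, rfl⟩ := ih
            exact ⟨_ :: A, B, D, rfl⟩
        rw [wlk_append, wlk_append] at hw
        simp only [msr, List.map_cons, List.sum_cons, List.map_append, List.sum_append] at hn
        rw [chainHom_append, chainHom_append,
          ih x B _ hw.2.1 (fun y hy => hM y (by simp at hy ⊢; tauto)),
          Category.id_comp, ← chainHom_append]
        · refine ih u (A ++ x :: D) ?_ (wlk_append.2 ⟨hw.1, hw.2.2⟩)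
            (fun y hy => hM y (by simp at hy ⊢; tauto))
          simp only [msr, List.map_cons, List.sum_cons, List.map_append, List.sum_append]; omega
        · simp only [msr, List.map_cons, List.sum_cons]; omega

lemma exists_lower (l : List (LatIn G δ)) : ∃ M : ℤ, ∀ y ∈ l, M ≤ y.1.2 := by
  induction l with
  | nil => exact ⟨0, by simp⟩
  | cons a l ih =>
    obtain ⟨M, hM⟩ := ih
    refine ⟨min M a.1.2, ?_⟩
    intro y hy
    rcases List.mem_cons.1 hy with rfl | hy
    · exact min_le_right _ _
    · exact (min_le_left _ _).trans (hM y hy)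

lemma walk_null' (hG : FullSet G) (hδ : 0 < δ) (u : LatIn G δ) (l : List (LatIn G δ))
    (hw : Wlk G δ u l u) : chainHom u l u = 𝟙 _ := by
  obtain ⟨M, hM⟩ := exists_lower (u :: l)
  exact walk_null hG hδ M _ u l le_rfl hw hM

/-! ### Approximation -/

/-- Lattice point below-left of `z`. -/
noncomputable def flr (δ : ℝ) (z : ℂ) : ℤ × ℤ := (⌊z.re / δ⌋, ⌊z.im / δ⌋)

lemma flr_close {δ a b : ℝ} (hδ : 0 < δ) (h : |a - b| < δ) :
    |δ * ⌊b / δ⌋ - a| < 2 * δ := by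
  have h1 := Int.floor_le (b / δ)
  have h2 := Int.lt_floor_add_one (b / δ)
  rw [le_div_iff₀ hδ] at h1
  rw [div_lt_iff₀ hδ] at h2
  rw [abs_lt] at *
  constructor <;> nlinarith

lemma flr_self {δ a : ℝ} (hδ : 0 < δ) : |δ * ⌊a / δ⌋ - a| ≤ δ := by
  have h1 := Int.floor_le (a / δ)
  have h2 := Int.lt_floor_add_one (a / δ)
  rw [le_div_iff₀ hδ] at h1
  rw [div_lt_iff₀ hδ] at h2
  rw [abs_le]
  constructor <;> nlinarith

lemma flr_adj {δ a b : ℝ} (hδ : 0 < δ) (h : |a - b| < δ) : |⌊a / δ⌋ - ⌊b / δ⌋| ≤ 1 := by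
  have h1 := Int.floor_le (b / δ)
  have h2 := Int.lt_floor_add_one (b / δ)
  have h3 := Int.floor_le (a / δ)
  have h4 := Int.lt_floor_add_one (a / δ)
  have h5 : |a / δ - b / δ| < 1 := by
    rw [← sub_div, abs_div, abs_of_pos hδ, div_lt_one hδ]; exact h
  rw [abs_lt] at h5
  have h6 : (⌊a / δ⌋ : ℝ) < ⌊b / δ⌋ + 2 := by linarith
  have h7 : (⌊b / δ⌋ : ℝ) < ⌊a / δ⌋ + 2 := by linarith
  have h6 : ⌊a / δ⌋ < ⌊b / δ⌋ + 2 := by exact_mod_cast h6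
  have h7 : ⌊b / δ⌋ < ⌊a / δ⌋ + 2 := by exact_mod_cast h7
  rw [abs_le]
  omega

lemma pt_dist {δ : ℝ} {v : ℤ × ℤ} {z : ℂ} {r s : ℝ} (h1 : |δ * v.1 - z.re| < r)
    (h2 : |δ * v.2 - z.im| ≤ s) : pt δ v ∈ Metric.ball z (r + s) := by
  rw [Metric.mem_ball, dist_eq_norm]
  refine (Complex.norm_le_abs_re_add_abs_im _).trans_lt ?_
  simp only [pt, Complex.sub_re, Complex.sub_im]
  linarith

end

section
variable {G : Set ℂ} [PathConnectedSpace G] {δ : ℝ}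

lemma approx_walk {x : G} (γ : Path x x) (hδ : 0 < δ)
    (hball : ∀ t, Metric.ball (γ t : ℂ) (4 * δ) ⊆ G) {n : ℕ}
    (hn : ∀ s t : unitInterval, |(s : ℝ) - t| ≤ 1 / n → dist (γ s : ℂ) (γ t) < δ)
    (v0 : LatIn G δ) (hv0 : v0.1 = flr δ (γ 0)) :
    ∀ (j : ℕ) (t : unitInterval), (t : ℝ) = j / n → ∀ v : LatIn G δ, v.1 = flr δ (γ t) →
      ∃ l, Wlk G δ v0 l v ∧
        (Path.Homotopic.Quotient.mk (γ.subpath 0 t) : (⟨γ 0⟩ : FundamentalGroupoid G) ⟶ ⟨γ t⟩) =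
          segHom (γ 0) (inG v0) ≫ chainHom v0 l v ≫ segHom (inG v) (γ t) := by
  have hself : ∀ z : ℂ, pt δ (flr δ z) ∈ Metric.ball z (4 * δ) := by
    intro z
    have := pt_dist (δ := δ) (v := flr δ z) (z := z) (r := 2 * δ) (s := δ)
      ((flr_self hδ).trans_lt (by linarith)) (flr_self hδ)
    exact Metric.ball_subset_ball (by linarith) this
  intro j
  induction j with
  | zero =>
    intro t ht v hv
    obtain rfl : t = 0 := Subtype.ext (by simpa using ht)
    obtain rfl : v = v0 := Subtype.ext (hv.trans hv0.symm)
    refine ⟨[], ⟨by simp [LatAdj], ?_⟩, ?_⟩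
    · rw [segment_same]
      exact Set.singleton_subset_iff.2 v.2
    · have h1 : ((inG v : G) : ℂ) ∈ Metric.ball (γ 0 : ℂ) (4 * δ) := by
        change pt δ v.1 ∈ _
        rw [hv]; exact hself _
      have h0 : (γ 0 : ℂ) ∈ Metric.ball (γ 0 : ℂ) (4 * δ) := Metric.mem_ball_self (by linarith)
      rw [chainHom, segHom_self, Category.id_comp,
        segHom_comp (convex_ball _ _) (hball 0) h0 h1 h0, Path.subpath_self]
      exact mk_eq_segHom (convex_ball _ _) (hball 0) _ (fun _ => h0)
  | succ j ih =>
    intro t' ht' v' hv'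
    have hn0 : 0 ≤ (1 : ℝ) / n := by positivity
    have ht'0 : (t' : ℝ) = j / n + 1 / n := by rw [ht']; push_cast; ring
    have hj0 : 0 ≤ (j : ℝ) / n := by positivity
    let t : unitInterval := ⟨j / n, hj0, by have := t'.2.2; linarith⟩
    have htt' : t ≤ t' := by
      change (j : ℝ) / n ≤ t'
      linarith
    have hK := hball t
    have hconv : Convex ℝ (Metric.ball (γ t : ℂ) (4 * δ)) := convex_ball _ _
    have hd : ∀ s ∈ Set.Icc t t', dist (γ s : ℂ) (γ t) < δ := by
      intro s hs
      apply hn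
      have h1 : (t : ℝ) ≤ s := hs.1
      have h2 : (s : ℝ) ≤ t' := hs.2
      rw [abs_of_nonneg (by linarith)]
      have : (t : ℝ) = j / n := rfl
      linarith
    have hdt' := hd t' ⟨htt', le_rfl⟩
    rw [dist_comm, dist_eq_norm] at hdt'
    have hre : |(γ t : ℂ).re - (γ t' : ℂ).re| < δ := by
      rw [← Complex.sub_re]; exact (Complex.abs_re_le_norm _).trans_lt hdt'
    have him : |(γ t : ℂ).im - (γ t' : ℂ).im| < δ := by
      rw [← Complex.sub_im]; exact (Complex.abs_im_le_norm _).trans_lt hdt'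
    have kp : (γ t : ℂ) ∈ Metric.ball (γ t : ℂ) (4 * δ) := Metric.mem_ball_self (by linarith)
    have kp' : (γ t' : ℂ) ∈ Metric.ball (γ t : ℂ) (4 * δ) := by
      rw [Metric.mem_ball, dist_comm, dist_eq_norm]; linarith
    have kv : pt δ (flr δ (γ t)) ∈ Metric.ball (γ t : ℂ) (4 * δ) := hself _
    let w0 : ℤ × ℤ := ((flr δ (γ t' : ℂ)).1, (flr δ (γ t : ℂ)).2)
    have kw : pt δ w0 ∈ Metric.ball (γ t : ℂ) (4 * δ) :=
      Metric.ball_subset_ball (by linarith)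
        (pt_dist (δ := δ) (v := w0) (r := 2 * δ) (s := δ) (flr_close hδ hre) (flr_self hδ))
    have kv' : pt δ (flr δ (γ t')) ∈ Metric.ball (γ t : ℂ) (4 * δ) :=
      Metric.ball_subset_ball (by linarith)
        (pt_dist (δ := δ) (v := flr δ (γ t' : ℂ)) (r := 2 * δ) (s := 2 * δ)
          (flr_close hδ hre) (flr_close hδ him).le)
    let v : LatIn G δ := ⟨flr δ (γ t), hK kv⟩
    let w : LatIn G δ := ⟨w0, hK kw⟩
    have kv'2 : ((inG v' : G) : ℂ) ∈ Metric.ball (γ t : ℂ) (4 * δ) := by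
      change pt δ v'.1 ∈ _
      rw [hv']; exact kv'
    obtain ⟨l, hl, hmk⟩ := ih t rfl v rfl
    refine ⟨l ++ v :: [w], wlk_append.2 ⟨hl, ⟨?_, ?_⟩, ⟨?_, ?_⟩⟩, ?_⟩
    · have := flr_adj hδ hre
      simpa [LatAdj, v, w, w0, flr] using this
    · exact (hconv.segment_subset kv kw).trans hK
    · have := flr_adj hδ him
      rw [hv']
      simpa [LatAdj, w, w0, flr] using this
    · exact (hconv.segment_subset kw kv'2).trans hK
    · have e1 : (Path.Homotopic.Quotient.mk (γ.subpath 0 t') :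
            (⟨γ 0⟩ : FundamentalGroupoid G) ⟶ ⟨γ t'⟩) =
          @CategoryStruct.comp (FundamentalGroupoid G) _ ⟨γ 0⟩ ⟨γ t⟩ ⟨γ t'⟩
            (Path.Homotopic.Quotient.mk (γ.subpath 0 t))
            (Path.Homotopic.Quotient.mk (γ.subpath t t')) :=
        (Path.Homotopic.Quotient.eq.2 ⟨Path.Homotopy.subpathTransSubpath γ 0 t t'⟩).symm
      have e2 : (Path.Homotopic.Quotient.mk (γ.subpath t t') :
            (⟨γ t⟩ : FundamentalGroupoid G) ⟶ ⟨γ t'⟩) = segHom (γ t) (γ t') := by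
        apply mk_eq_segHom hconv hK
        intro s
        have : γ.subpath t t' s ∈ Set.range (γ.subpath t t') := ⟨s, rfl⟩
        rw [Path.range_subpath_of_le _ _ _ htt'] at this
        obtain ⟨s', hs', h⟩ := this
        rw [← h]
        exact (hd s' hs').trans (by linarith)
      rw [e1, e2, hmk, chainHom_append]
      simp only [chainHom, Category.assoc]
      rw [segHom_comp hconv hK (x := inG w) (y := inG v') kw kv'2 kp',
        segHom_comp hconv hK (x := inG v) (y := inG w) kv kw kp',
        segHom_comp hconv hK (x := inG v) kv kp kp']

lemma mk_cast_aux {x : G} (γ : Path x x) {a b : G} (ha : a = x) (hb : b = x)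
    (h : (Path.Homotopic.Quotient.mk (γ.cast ha hb) : (⟨a⟩ : FundamentalGroupoid G) ⟶ ⟨b⟩) =
      segHom a b) :
    (Path.Homotopic.Quotient.mk γ : (⟨x⟩ : FundamentalGroupoid G) ⟶ ⟨x⟩) = 𝟙 (⟨x⟩ : FundamentalGroupoid G) := by
  subst ha
  subst hb
  rw [← segHom_self, ← h]
  rfl

theorem simply_connected_of_full (hGo : IsOpen G) (hG : FullSet G) : SimplyConnectedSpace G := by
  rw [simply_connected_iff_loops_nullhomotopic]
  refine ⟨inferInstance, ?_⟩
  intro x γ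
  have hc : Continuous (fun t => (γ t : ℂ)) := continuous_subtype_val.comp γ.continuous
  obtain ⟨r, hr, hrG⟩ := (isCompact_range hc).exists_thickening_subset_open hGo
    (by rintro _ ⟨t, rfl⟩; exact (γ t).2)
  obtain ⟨δ, hδ, hδr⟩ : ∃ δ > 0, 4 * δ = r := ⟨r / 4, by linarith, by ring⟩
  have hball : ∀ t, Metric.ball (γ t : ℂ) (4 * δ) ⊆ G := by
    intro t z hz
    rw [hδr] at hz
    exact hrG (Metric.mem_thickening_iff.2 ⟨_, ⟨t, rfl⟩, hz⟩)
  have huc := CompactSpace.uniformContinuous_of_continuous hc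
  rw [Metric.uniformContinuous_iff] at huc
  obtain ⟨η, hη, hη'⟩ := huc δ hδ
  obtain ⟨n, hn⟩ := exists_nat_one_div_lt hη
  have hn' : ∀ s t : unitInterval, |(s : ℝ) - t| ≤ 1 / ((n + 1 : ℕ) : ℝ) →
      dist (γ s : ℂ) (γ t) < δ := by
    intro s t h
    apply hη'
    rw [Subtype.dist_eq, Real.dist_eq]
    push_cast at h
    linarith
  have hself : pt δ (flr δ (γ 0)) ∈ Metric.ball (γ 0 : ℂ) (4 * δ) := by
    have := pt_dist (δ := δ) (v := flr δ (γ 0)) (z := γ 0) (r := 2 * δ) (s := δ)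
      ((flr_self hδ).trans_lt (by linarith)) (flr_self hδ)
    exact Metric.ball_subset_ball (by linarith) this
  let v0 : LatIn G δ := ⟨flr δ (γ 0), hball 0 hself⟩
  have h01 : γ 0 = γ 1 := by rw [γ.source, γ.target]
  obtain ⟨l, hl, hmk⟩ := approx_walk γ hδ hball hn' v0 rfl (n + 1) 1
    (by
      have : ((n + 1 : ℕ) : ℝ) ≠ 0 := by positivity
      rw [div_self this]; rfl) v0 (by rw [← h01])
  rw [walk_null' hG hδ v0 l hl, Category.id_comp,
    segHom_comp (convex_ball _ _) (hball 0) (Metric.mem_ball_self (by linarith))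
      hself (by rw [← h01]; exact Metric.mem_ball_self (by linarith)),
    Path.subpath_zero_one] at hmk
  exact Path.Homotopic.Quotient.eq.1 (mk_cast_aux γ _ _ hmk)

end



/-- **Remark after Theorem 2.1.** Let `E ⊂ ℂ` be compact, `Ω` the unbounded component of the
complement and `𝓔 = ℂ̄ ∖ Ω`. If `E₀ ⊆ 𝓔` is closed with `dist(E₀, 𝓔 ∖ E₀) > 0`, then every
connected component of `int E₀` is simply connected. -/
theorem components_of_interior_simply_connected
    (E : Set ℂ) (hE : IsCompact E)
    (E₀ : Set ℂ) (hE₀closed : IsClosed E₀) (hE₀sub : E₀ ⊆ (outerDomain E)ᶜ)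
    (hdist : ∃ d > 0, ∀ a ∈ E₀, ∀ b ∈ (outerDomain E)ᶜ \ E₀, d ≤ dist a b) :
    ∀ z ∈ interior E₀, SimplyConnectedSpace (connectedComponentIn (interior E₀) z) := by
  intro z hz
  have hGo : IsOpen (connectedComponentIn (interior E₀) z) :=
    isOpen_interior.connectedComponentIn
  have hGc : IsConnected (connectedComponentIn (interior E₀) z) :=
    isConnected_connectedComponentIn_iff.2 hz
  have : PathConnectedSpace (connectedComponentIn (interior E₀) z) :=
    isPathConnected_iff_pathConnectedSpace.1 (hGo.isConnected_iff_isPathConnected.1 hGc)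
  exact simply_connected_of_full hGo (full_component E E₀ hE₀sub hdist z)
end
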